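/- arXiv:1908.06020 — 4 statements merged into one kernel-verified Lean document; each statement's English description precedes it below -/
import Mathlib

section
/- Let the square polynomial system 𝒢 (in the kn + k² unknowns (y_1,…,y_k,Λ)) be as described. If for some p* ∈ ℂ^ℓ and some injective list of k monomials of total degree at most d the system 𝒢 has a nonsingular solution (q_1,…,q_k,Λ*), then HF_I(d) ≥ k, i.e., C(n+d,d) − dim_𝔎 I_{≤d} ≥ k. -/
/-!
The monomials `m₁,…,m_k` are shown to be linearly independent modulo `I`; since they have degree
at most `d`, their span and `I_{≤d}` are then disjoint subspaces of the space of polynomials of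
degree at most `d`, whose dimension is `C(n+d,d)`, and the bound follows.

For the independence, let `f ∈ I` be supported on the `m_j`. Clearing denominators gives a multiple
`g ∈ ⟨H₁,…,Hₙ⟩ ⊆ ℚ[p][x]` of `f`, with the same support. Because the derivative of `𝒢` at the given
solution is invertible, the inverse function theorem for `(p, z) ↦ (p, 𝒢_p(z))` shows that `𝒢_p`
has a zero `(y₁,…,y_k,Λ)` for every `p` near `p*` (`eventually_exists_zero`). Evaluating `g` at `p`
and at the `y_a` gives `S_d(y) c(p) = 0`, where `c(p)` is the vector of coefficients of `g`; as
`Λ S_d(y) = I_k`, the vector `c(p)` vanishes (`aeval_coeff_eq_zero`). So each coefficient of `g` is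
a polynomial vanishing on an open subset of `ℂ^ℓ`, hence zero.
-/

open MvPolynomial

set_option synthInstance.maxHeartbeats 1000000
set_option maxHeartbeats 1000000

/-- The rational function field `𝔎 = ℚ(p₁,…,p_ℓ)`. -/
abbrev RatFuncField (ℓ : ℕ) : Type := FractionRing (MvPolynomial (Fin ℓ) ℚ)

/-- The specialization `h_{j,p*} ∈ ℂ[x₁,…,xₙ]` of `H_j ∈ ℚ[p₁,…,p_ℓ][x₁,…,xₙ]` at
`p* ∈ ℂ^ℓ`. -/
noncomputable def specialize {ℓ n : ℕ} (pstar : Fin ℓ → ℂ)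
    (Hj : MvPolynomial (Fin n) (MvPolynomial (Fin ℓ) ℚ)) : MvPolynomial (Fin n) ℂ :=
  map ((aeval pstar : MvPolynomial (Fin ℓ) ℚ →ₐ[ℚ] ℂ) : MvPolynomial (Fin ℓ) ℚ →+* ℂ) Hj

/-- The square polynomial system `𝒢` in the `kn + k²` unknowns `(y₁,…,y_k,Λ)`: the equations
`G_{p*}(yᵢ) = 0` for `i = 1,…,k`, together with `Λ·S_d(y₁,…,y_k) = I_k`, where
`S_d(y₁,…,y_k)` is the `k×k` matrix with `(i,j)` entry `m_j(yᵢ)` for an injective list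
`m₁,…,m_k` of monomials (given by exponent vectors `m : Fin k → (Fin n →₀ ℕ)`). -/
noncomputable def sysG {ℓ n k : ℕ} (pstar : Fin ℓ → ℂ)
    (H : Fin n → MvPolynomial (Fin n) (MvPolynomial (Fin ℓ) ℚ))
    (m : Fin k → (Fin n →₀ ℕ)) :
    ((Fin k → Fin n → ℂ) × (Fin k → Fin k → ℂ)) →
      ((Fin k → Fin n → ℂ) × (Fin k → Fin k → ℂ)) :=
  fun z =>
    (fun a j => eval (z.1 a) (specialize pstar (H j)),
     fun a b =>
       (∑ c : Fin k, z.2 a c * ∏ t : Fin n, z.1 c t ^ (m b) t) -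
         if a = b then 1 else 0)

/-- The joint map `(p, z) ↦ 𝒢_p(z)` is smooth, being polynomial. -/
lemma contDiff_sysG {ℓ n k : ℕ}
    (H : Fin n → MvPolynomial (Fin n) (MvPolynomial (Fin ℓ) ℚ)) (m : Fin k → (Fin n →₀ ℕ)) :
    ContDiff ℂ 1 (fun x : (Fin ℓ → ℂ) × ((Fin k → Fin n → ℂ) × (Fin k → Fin k → ℂ)) =>
      sysG x.1 H m x.2) := by
  have haeval : ∀ c : MvPolynomial (Fin ℓ) ℚ, ContDiff ℂ 1 (fun p : Fin ℓ → ℂ => aeval p c) := by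
    intro c
    induction c using MvPolynomial.induction_on with
    | C a => simpa using contDiff_const
    | add p q hp hq => simpa using hp.add hq
    | mul_X p i hp => simpa using hp.mul (contDiff_apply ℂ ℂ i)
  have heval : ∀ (h : MvPolynomial (Fin n) (MvPolynomial (Fin ℓ) ℚ)),
      ContDiff ℂ 1 (fun x : (Fin ℓ → ℂ) × (Fin n → ℂ) => eval x.2 (specialize x.1 h)) := by
    intro h
    induction h using MvPolynomial.induction_on with
    | C a =>
      have := (haeval a).comp (contDiff_fst (𝕜 := ℂ) (E := Fin ℓ → ℂ) (F := Fin n → ℂ))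
      simp only [specialize, map_C, eval_C]
      exact this
    | add p q hp hq => simpa [specialize] using hp.add hq
    | mul_X p i hp =>
      have hi : ContDiff ℂ 1 (fun x : (Fin ℓ → ℂ) × (Fin n → ℂ) => x.2 i) := by fun_prop
      simpa [specialize] using hp.mul hi
  unfold sysG
  refine ContDiff.prodMk ?_ ?_
  · refine contDiff_pi.2 fun a => contDiff_pi.2 fun j => ?_
    exact (heval (H j)).comp (f := fun x : (Fin ℓ → ℂ) ×
      ((Fin k → Fin n → ℂ) × (Fin k → Fin k → ℂ)) => (x.1, x.2.1 a)) (by fun_prop)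
  · refine contDiff_pi.2 fun a => contDiff_pi.2 fun b => ?_
    refine ContDiff.sub (ContDiff.sum fun c _ => ContDiff.mul (by fun_prop) ?_) contDiff_const
    refine contDiff_prod fun t _ => ContDiff.pow ?_ _
    fun_prop

/-- A nonsingular zero of `𝒢_{p*}` persists: `𝒢_p` has a zero for all `p` near `p*`. -/
lemma eventually_exists_zero {ℓ n k : ℕ}
    (H : Fin n → MvPolynomial (Fin n) (MvPolynomial (Fin ℓ) ℚ))
    (pstar : Fin ℓ → ℂ) (m : Fin k → (Fin n →₀ ℕ))
    (z : (Fin k → Fin n → ℂ) × (Fin k → Fin k → ℂ))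
    (hz : sysG pstar H m z = 0)
    (hreg : Function.Bijective (fderiv ℂ (sysG pstar H m) z)) :
    ∀ᶠ p in nhds pstar, ∃ w, sysG p H m w = 0 := by
  let Φ := fun x : (Fin ℓ → ℂ) × ((Fin k → Fin n → ℂ) × (Fin k → Fin k → ℂ)) => sysG x.1 H m x.2
  have hΦ : HasStrictFDerivAt Φ (fderiv ℂ Φ (pstar, z)) (pstar, z) :=
    (contDiff_sysG H m).contDiffAt.hasStrictFDerivAt one_ne_zero
  have hF := (hasStrictFDerivAt_fst (𝕜 := ℂ) (p := (pstar, z))).prodMk hΦ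
  have hpart : ∀ b, fderiv ℂ (sysG pstar H m) z b = fderiv ℂ Φ (pstar, z) (0, b) := by
    intro b
    have h1 := hΦ.hasFDerivAt.comp z (hasFDerivAt_prodMk_right pstar z)
    have h2 : fderiv ℂ (sysG pstar H m) z = _ := h1.fderiv
    rw [h2]; simp
  -- The derivative `(a, b) ↦ (a, Φ'(a, b))` is onto because its restriction to `a = 0` is.
  have hnhds := hF.map_nhds_eq_of_surj (by
    rw [LinearMap.range_eq_top]
    rintro ⟨u, w⟩
    obtain ⟨b, hb⟩ := hreg.2 (w - fderiv ℂ Φ (pstar, z) (u, 0))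
    refine ⟨(u, b), ?_⟩
    have hsplit : ((u, b) : (Fin ℓ → ℂ) × ((Fin k → Fin n → ℂ) × (Fin k → Fin k → ℂ)))
        = (u, 0) + (0, b) := by simp
    have : fderiv ℂ Φ (pstar, z) (u, b) = w := by
      rw [hsplit, map_add, ← hpart, hb]; abel
    simpa using this)
  have hΦ0 : Φ (pstar, z) = 0 := hz
  rw [hΦ0] at hnhds
  have hrange : ∀ᶠ y in nhds (pstar, (0 : (Fin k → Fin n → ℂ) × (Fin k → Fin k → ℂ))),
      ∃ x, (x.1, Φ x) = y := by
    rw [← hnhds]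
    exact Filter.eventually_map.2 (Filter.Eventually.of_forall fun x => ⟨x, rfl⟩)
  have hcont : Filter.Tendsto
      (fun p : Fin ℓ → ℂ => (p, (0 : (Fin k → Fin n → ℂ) × (Fin k → Fin k → ℂ))))
      (nhds pstar) (nhds (pstar, 0)) := (Continuous.prodMk_left 0).tendsto pstar
  filter_upwards [hcont.eventually hrange] with p hp
  obtain ⟨⟨p', w⟩, hx⟩ := hp
  obtain ⟨rfl, h⟩ := Prod.mk.inj hx
  exact ⟨w, h⟩

/-- Where `𝒢_p` has a zero, the coefficients of any `g ∈ ⟨H₁,…,Hₙ⟩` supported on the chosen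
monomials vanish at `p`, because `S_d(y)` is invertible. -/
lemma aeval_coeff_eq_zero {ℓ n k : ℕ}
    (H : Fin n → MvPolynomial (Fin n) (MvPolynomial (Fin ℓ) ℚ))
    (m : Fin k → (Fin n →₀ ℕ)) (hm : Function.Injective m)
    (g : MvPolynomial (Fin n) (MvPolynomial (Fin ℓ) ℚ))
    (hg : g ∈ Ideal.span (Set.range H)) (hsupp : (g.support : Set (Fin n →₀ ℕ)) ⊆ Set.range m)
    (p : Fin ℓ → ℂ) (w : (Fin k → Fin n → ℂ) × (Fin k → Fin k → ℂ))
    (hw : sysG p H m w = 0) (j : Fin k) : aeval p (coeff (m j) g) = 0 := by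
  have h1 : ∀ a i, eval (w.1 a) (specialize p (H i)) = 0 := fun a i =>
    congrFun (congrFun (congrArg Prod.fst hw) a) i
  have h2 : ∀ a b, (∑ c : Fin k, w.2 a c * ∏ t : Fin n, w.1 c t ^ (m b) t) =
      if a = b then 1 else 0 := fun a b =>
    sub_eq_zero.1 (congrFun (congrFun (congrArg Prod.snd hw) a) b)
  have hvanish : ∀ a, eval (w.1 a) (specialize p g) = 0 := by
    intro a
    let φ : MvPolynomial (Fin n) (MvPolynomial (Fin ℓ) ℚ) →+* ℂ := (eval (w.1 a)).comp
      (map ((aeval p : MvPolynomial (Fin ℓ) ℚ →ₐ[ℚ] ℂ) : MvPolynomial (Fin ℓ) ℚ →+* ℂ))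
    have hle : Ideal.span (Set.range H) ≤ RingHom.ker φ := by
      rw [Ideal.span_le]
      rintro _ ⟨i, rfl⟩
      exact h1 a i
    exact hle hg
  have hexp : ∀ a, eval (w.1 a) (specialize p g) =
      ∑ b, aeval p (coeff (m b) g) * ∏ t, w.1 a t ^ (m b) t := by
    intro a
    classical
    have hsub : g.support ⊆ Finset.univ.image m := by
      intro s hs
      obtain ⟨b, rfl⟩ := hsupp hs
      simp
    have hsum : ∑ s ∈ g.support, aeval p (coeff s g) * ∏ t, w.1 a t ^ s t =
        ∑ s ∈ Finset.univ.image m, aeval p (coeff s g) * ∏ t, w.1 a t ^ s t := by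
      refine Finset.sum_subset hsub fun s _ hs => ?_
      rw [notMem_support_iff.1 hs]; simp
    rw [Finset.sum_image fun x _ y _ h => hm h] at hsum
    rw [← hsum, specialize, eval_map, eval₂_eq']
    rfl
  -- Multiply `S_d(y) c(p) = 0` by the `j`-th row of `Λ`.
  calc aeval p (coeff (m j) g)
      = ∑ b, aeval p (coeff (m b) g) * (if j = b then 1 else 0) := by simp
    _ = ∑ b, aeval p (coeff (m b) g) * ∑ c, w.2 j c * ∏ t, w.1 c t ^ (m b) t := by
        simp_rw [h2]
    _ = ∑ c, w.2 j c * ∑ b, aeval p (coeff (m b) g) * ∏ t, w.1 c t ^ (m b) t := by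
        simp_rw [Finset.mul_sum]
        rw [Finset.sum_comm]
        exact Finset.sum_congr rfl fun _ _ => Finset.sum_congr rfl fun _ _ => by ring
    _ = 0 := by simp [← hexp, hvanish]

lemma eq_zero_of_eventually_aeval_eq_zero {ℓ : ℕ} (c : MvPolynomial (Fin ℓ) ℚ)
    (pstar : Fin ℓ → ℂ) (h : ∀ᶠ p in nhds pstar, aeval p c = 0) : c = 0 := by
  obtain ⟨ε, hε, hball⟩ := Metric.eventually_nhds_iff_ball.1 h
  refine map_injective (algebraMap ℚ ℂ) (algebraMap ℚ ℂ).injective ?_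
  rw [map_zero]
  refine funext_set (fun i => Metric.ball (pstar i) ε) (fun i => ?_) fun x hx => ?_
  · exact infinite_of_mem_nhds (pstar i) (Metric.ball_mem_nhds _ hε)
  · rw [map_zero, eval_map, ← aeval_def]
    refine hball x ?_
    rwa [ball_pi _ hε]

/-- There are `C(n+d,d)` monomials of degree at most `d` in `n` variables. -/
lemma finrank_restrictTotalDegree (K : Type*) [Field K] (n d : ℕ) :
    Module.finrank K (restrictTotalDegree (Fin n) K d) = Nat.choose (n + d) d := by
  have hcard : ∀ d : ℕ, ∃ S : Finset (Fin n →₀ ℕ),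
      (∀ s, s ∈ S ↔ (s.sum fun _ e => e) ≤ d) ∧ S.card = Nat.choose (n + d) d := by
    intro d
    have hmem : ∀ (e : ℕ) (s : Fin n →₀ ℕ),
        s ∈ Finset.finsuppAntidiag Finset.univ e ↔ (s.sum fun _ e => e) = e := by
      intro e s
      rw [Finset.mem_finsuppAntidiag, Finsupp.sum_fintype _ _ (fun _ => rfl)]
      simp
    induction d with
    | zero =>
      refine ⟨Finset.finsuppAntidiag Finset.univ 0, fun s => ?_, ?_⟩
      · rw [hmem, Nat.le_zero]
      · simp
    | succ d ih =>
      obtain ⟨S, hS, hc⟩ := ih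
      classical
      refine ⟨S ∪ Finset.finsuppAntidiag Finset.univ (d + 1), fun s => ?_, ?_⟩
      · rw [Finset.mem_union, hS, hmem]; omega
      · rw [Finset.card_union_of_disjoint, hc, Finset.card_finsuppAntidiag_nat_eq_choose,
          Finset.card_univ, Fintype.card_fin, ← add_assoc n d 1, Nat.add_sub_cancel,
          Nat.choose_succ_succ]
        rw [Finset.disjoint_left]
        intro s h1 h2
        rw [hS] at h1
        rw [hmem] at h2
        omega
  obtain ⟨S, hS, hc⟩ := hcard d
  have hset : {s : Fin n →₀ ℕ | (s.sum fun _ e => e) ≤ d} = (S : Set (Fin n →₀ ℕ)) := by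
    ext s; simp [hS]
  unfold restrictTotalDegree
  rw [hset, Module.finrank_eq_nat_card_basis (basisRestrictSupport K (S : Set (Fin n →₀ ℕ))), ← hc]
  simp

/-- The chosen monomials are linearly independent modulo `I`. -/
lemma disjoint_restrictSupport {ℓ n k : ℕ}
    (H : Fin n → MvPolynomial (Fin n) (MvPolynomial (Fin ℓ) ℚ))
    (pstar : Fin ℓ → ℂ)
    (m : Fin k → (Fin n →₀ ℕ)) (hm : Function.Injective m)
    (z : (Fin k → Fin n → ℂ) × (Fin k → Fin k → ℂ))
    (hz : sysG pstar H m z = 0)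
    (hreg : Function.Bijective (fderiv ℂ (sysG pstar H m) z))
    (f : MvPolynomial (Fin n) (RatFuncField ℓ))
    (hfI : f ∈ Ideal.span (Set.range fun j =>
      map (algebraMap (MvPolynomial (Fin ℓ) ℚ) (RatFuncField ℓ)) (H j)))
    (hfm : (f.support : Set (Fin n →₀ ℕ)) ⊆ Set.range m) : f = 0 := by
  have hinj : Function.Injective (algebraMap (MvPolynomial (Fin ℓ) ℚ) (RatFuncField ℓ)) :=
    IsFractionRing.injective _ _
  let : Algebra (MvPolynomial (Fin n) (MvPolynomial (Fin ℓ) ℚ))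
      (MvPolynomial (Fin n) (RatFuncField ℓ)) := algebraMvPolynomial
  have hI : f ∈ Ideal.map (algebraMap (MvPolynomial (Fin n) (MvPolynomial (Fin ℓ) ℚ))
      (MvPolynomial (Fin n) (RatFuncField ℓ))) (Ideal.span (Set.range H)) := by
    rw [Ideal.map_span, ← Set.range_comp]
    exact hfI
  obtain ⟨⟨⟨g, hg⟩, ⟨_, s, hs, rfl⟩⟩, hgs⟩ := (IsLocalization.mem_map_algebraMap_iff
    ((nonZeroDivisors (MvPolynomial (Fin ℓ) ℚ)).map (C (σ := Fin n))) _).1 hI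
  simp only [algebraMap_def, map_C] at hgs
  have hcoeff : ∀ t, coeff t f * algebraMap _ (RatFuncField ℓ) s =
      algebraMap _ (RatFuncField ℓ) (coeff t g) := by
    intro t
    rw [← coeff_map, ← hgs, mul_comm f, coeff_C_mul, mul_comm]
  have hsupp : (g.support : Set (Fin n →₀ ℕ)) ⊆ Set.range m := by
    intro t ht
    refine hfm ?_
    rw [Finset.mem_coe, mem_support_iff] at ht ⊢
    intro h0
    refine ht (hinj ?_)
    rw [← hcoeff, h0, zero_mul, map_zero]
  have hs0 : algebraMap _ (RatFuncField ℓ) s ≠ 0 := fun h =>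
    nonZeroDivisors.ne_zero hs (hinj (by rw [h, map_zero]))
  have hg0 : ∀ j, coeff (m j) g = 0 := fun j =>
    eq_zero_of_eventually_aeval_eq_zero _ pstar <|
      (eventually_exists_zero H pstar m z hz hreg).mono fun p ⟨w, hw⟩ =>
        aeval_coeff_eq_zero H m hm g hg hsupp p w hw j
  ext t
  rw [coeff_zero]
  by_contra ht
  obtain ⟨j, rfl⟩ := hfm (mem_support_iff.2 ht)
  have := hcoeff (m j)
  rw [hg0, map_zero] at this
  exact (mul_ne_zero ht hs0) this

/-- Theorem 3.1 of the paper.  If for some `p* ∈ ℂ^ℓ` and some injective list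
of `k` monomials of total degree at most `d` the system `𝒢` has a nonsingular solution
(a zero at which the derivative of `𝒢 : ℂ^{kn+k²} → ℂ^{kn+k²}` is invertible), then
`HF_I(d) ≥ k`, i.e. `C(n+d,d) − dim_𝔎 I_{≤d} ≥ k`, where `I = ⟨h₁,…,hₙ⟩ ⊆ 𝔎[x₁,…,xₙ]` is
generated by the images of the `H_j` in `𝔎[x₁,…,xₙ]`, `𝔎 = ℚ(p₁,…,p_ℓ)`. -/
theorem certified_hilbert_lower_bound (ℓ n k d : ℕ)
    (H : Fin n → MvPolynomial (Fin n) (MvPolynomial (Fin ℓ) ℚ))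
    (pstar : Fin ℓ → ℂ)
    (m : Fin k → (Fin n →₀ ℕ)) (hm : Function.Injective m)
    (hmd : ∀ j, ((m j).sum fun _ e => e) ≤ d)
    (z : (Fin k → Fin n → ℂ) × (Fin k → Fin k → ℂ))
    (hz : sysG pstar H m z = 0)
    (hreg : Function.Bijective (fderiv ℂ (sysG pstar H m) z)) :
    k ≤ Nat.choose (n + d) d -
        Module.finrank (RatFuncField ℓ)
          ↥((Ideal.span (Set.range fun j =>
                map (algebraMap (MvPolynomial (Fin ℓ) ℚ) (RatFuncField ℓ))
                  (H j))).restrictScalars (RatFuncField ℓ) ⊓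
            restrictTotalDegree (Fin n) (RatFuncField ℓ) d) := by
  let K := RatFuncField ℓ
  set J := (Ideal.span (Set.range fun j =>
    map (algebraMap (MvPolynomial (Fin ℓ) ℚ) K) (H j))).restrictScalars K
  set W := restrictTotalDegree (Fin n) K d
  let M := restrictSupport K (Set.range m)
  have hMW : M ≤ W := restrictSupport_mono K (by rintro _ ⟨j, rfl⟩; exact hmd j)
  have hdisj : Disjoint M (J ⊓ W) := by
    rw [Submodule.disjoint_def]
    intro f hfM hfJ
    exact disjoint_restrictSupport H pstar m hm z hz hreg f hfJ.1 hfM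
  have hfinM : Module.finrank K M = k := by
    rw [Module.finrank_eq_nat_card_basis (basisRestrictSupport K (Set.range m)),
      ← Nat.card_congr (Equiv.ofInjective m hm)]
    simp
  have hfinW : Module.finrank K W = Nat.choose (n + d) d := finrank_restrictTotalDegree K n d
  have : Module.Finite K M := Submodule.finiteDimensional_of_le hMW
  have : Module.Finite K ↥(J ⊓ W) := Submodule.finiteDimensional_of_le inf_le_right
  have hadd := Submodule.finrank_sup_add_finrank_inf_eq M (J ⊓ W)
  rw [hdisj.eq_bot, finrank_bot, hfinM, add_zero] at hadd
  have hle : Module.finrank K ↥(M ⊔ J ⊓ W) ≤ Module.finrank K W :=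
    Submodule.finrank_mono (sup_le hMW inf_le_right)
  rw [hadd, hfinW] at hle
  exact Nat.le_sub_of_add_le hle
end

section
/- There exist a nonzero polynomial c with rational coefficients in the i·n + (n−i)·r + r parameter entries of (Θ,Λ,μ) and a nonnegative integer g_i such that for every (Θ,Λ,μ) ∈ ℚ^{i×n} × ℚ^{(n−i)×r} × ℚ^r with c(Θ,Λ,μ) ≠ 0: the quotient ℚ[x_1,…,x_n,T]/I_i(Θ,Λ,μ) is a finite-dimensional ℚ-vector space of dimension exactly g_i (this includes the case that I_i(Θ,Λ,μ) is the unit ideal, with g_i = 0), and the set {x ∈ ℂ^n : Θ·x = 1, Λ·f(x) = 0} \ X is finite with exactly g_i elements. In particular dim_ℚ(ℚ[x_1,…,x_n,T]/I_i(Θ,Λ,μ)) is independent of the choice of (Θ,Λ,μ) subject to c(Θ,Λ,μ) ≠ 0. -/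
/-!
Write `A = ℚ[Θ, Λ, μ]` for the polynomial ring in the parameters and let `B` be the universal
algebra `A[x, T] / I` of the system `Θx = 1`, `Λ f(x) = 0`, `(μ · f(x)) T = 1`. The claim is that
over a nonempty open set of parameters `B` is finite étale of constant rank and that its complex
points over `(Θ, Λ, μ)` are the points of `{Θx = 1, Λ f(x) = 0} \ X`.

*Transversality.* Let `L` be an algebraic closure of `Frac A`. Since `L` is formally étale over
`A`, there are derivations of `L` taking arbitrary prescribed values on the parameters
(`exists_derivation`). Let `x ∈ Lⁿ` satisfy `Θx = 1`, `Λ f(x) = 0` and `f(x) ≠ 0`, with generic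
coefficients. Applying derivations to the equations shows that a linear relation among the rows of
the Jacobian in `x` annihilates every value of the derivative with respect to the parameters;
these values fill the whole target because `x ≠ 0` and `f(x) ≠ 0`, so the rows are independent
(`left_kernel_trivial`). This is an algebraic form of Bertini's theorem. With `i + (n - i) = n`
equations the Jacobian determinant is thus nonzero at every generic solution (`jac_det_ne_zero`),
and the extra equation `μ · f(x) = 0` would give `n + 1` independent vectors in `Lⁿ`, so it has no
solution off `X` (`no_extra_solution`).

*Spreading out.* By the Nullstellensatz, a polynomial vanishing at no generic solution divides a
nonzero element of `A` modulo the equations (`exists_dvd`). Hence outside the zero locus of some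
nonzero elements of `A` the Jacobian determinant is a unit (`exists_jac_dvd`), and `μ · f` is
nonzero at every point of `{Θx = 1, Λ f(x) = 0} \ X` (`exists_comb_dvd`). A unit Jacobian makes the
quotient algebra unramified over the base field, hence finite-dimensional. Applied to `Frac A` this
shows that `Frac A ⊗ B` is finite, so `B` becomes free over `A[1/c]` for some `c ≠ 0`, and the
dimension of the specialisations is constant there (`generic_finrank`).

*Counting.* A finite unramified `ℚ`-algebra has exactly as many `ℚ`-algebra maps to `ℂ` as its
dimension (`card_algHom_eq`), and for good parameters these maps are the points of
`{Θx = 1, Λ f(x) = 0} \ X`, the value of `T` being forced to be `(μ · f(x))⁻¹` (`exists_points`).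
-/

open MvPolynomial

/-- The ideal `I_i(Θ,Λ,μ) ⊆ ℚ[x₁,…,xₙ,T]` generated by the `i` entries of `Θ·x − 1`, the
`n−i` entries of `Λ·f`, and the polynomial `1 − (μ·f)·T`.  The variable ring is
`MvPolynomial (Fin n ⊕ Unit) ℚ`, where `Sum.inl j` is `x_j` and `Sum.inr ()` is `T`. -/
noncomputable def satIdeal {n r : ℕ} (i : ℕ) (f : Fin r → MvPolynomial (Fin n) ℚ)
    (Θ : Matrix (Fin i) (Fin n) ℚ) (Λ : Matrix (Fin (n - i)) (Fin r) ℚ)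
    (μ : Fin r → ℚ) : Ideal (MvPolynomial (Fin n ⊕ Unit) ℚ) :=
  Ideal.span
    ((Set.range fun k : Fin i =>
        (∑ j : Fin n, C (Θ k j) * X (Sum.inl j)) - 1) ∪
      (Set.range fun k : Fin (n - i) =>
        ∑ j : Fin r, C (Λ k j) * rename Sum.inl (f j)) ∪
      {1 - (∑ j : Fin r, C (μ j) * rename Sum.inl (f j)) * X (Sum.inr ())})

open scoped TensorProduct

/-! ### Derivations and transversality -/

/-- The chain rule for a derivation applied to a polynomial expression. -/
theorem derivation_aeval {n : ℕ} {S M : Type*} [CommRing S] [Algebra ℚ S] [AddCommGroup M]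
    [Module ℚ M] [Module S M] (D : Derivation ℚ S M)
    (x : Fin n → S) (p : MvPolynomial (Fin n) ℚ) :
    D (aeval x p) = ∑ j, aeval x (pderiv j p) • D (x j) := by
  induction p using MvPolynomial.induction_on with
  | C a => simp
  | add p q hp hq => simp [hp, hq, add_smul, Finset.sum_add_distrib]
  | mul_X p j hp =>
    simp only [map_mul, aeval_X, Derivation.leibniz, hp, smul_eq_mul, map_add, add_smul,
      Finset.sum_add_distrib, Finset.smul_sum, pderiv_X, smul_smul]
    congr 1
    rw [Finset.sum_eq_single j]
    · simp
    · intro b _ hb; simp [hb.symm]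
    · simp

/-- A field `L` formally étale over a polynomial ring `ℚ[σ]` has derivations with arbitrary values
on the variables: `Ω[L⁄ℚ]` is the base change to `L` of the free module `Ω[ℚ[σ]⁄ℚ]`. -/
theorem exists_derivation {σ : Type} (L : Type) [Field L] [Algebra (MvPolynomial σ ℚ) L]
    [Algebra ℚ L] [IsScalarTower ℚ (MvPolynomial σ ℚ) L]
    [Algebra.FormallyEtale (MvPolynomial σ ℚ) L] (v : σ → L) :
    ∃ D : Derivation ℚ L L, ∀ s, D (algebraMap (MvPolynomial σ ℚ) L (X s)) = v s := by
  let D₀ : Derivation ℚ (MvPolynomial σ ℚ) L := mkDerivation ℚ v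
  let ψ : L ⊗[MvPolynomial σ ℚ] Ω[MvPolynomial σ ℚ⁄ℚ] →ₗ[L] L :=
    LinearMap.liftBaseChange L D₀.liftKaehlerDifferential
  let χ : Ω[L⁄ℚ] →ₗ[L] L := ψ ∘ₗ
    (KaehlerDifferential.tensorKaehlerEquivOfFormallyEtale ℚ (MvPolynomial σ ℚ) L).symm.toLinearMap
  refine ⟨χ.compDer (KaehlerDifferential.D ℚ L), fun s => ?_⟩
  have : (χ.compDer (KaehlerDifferential.D ℚ L)) (algebraMap (MvPolynomial σ ℚ) L (X s)) =
      ψ ((KaehlerDifferential.tensorKaehlerEquivOfFormallyEtale ℚ (MvPolynomial σ ℚ) L).symm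
        (KaehlerDifferential.D ℚ L (algebraMap (MvPolynomial σ ℚ) L (X s)))) := rfl
  rw [this, KaehlerDifferential.tensorKaehlerEquivOfFormallyEtale_symm_D_algebraMap]
  simp [ψ, D₀]

/-- The transversality argument. If the coefficients `θ`, `l` can be moved freely by derivations,
then at a solution `x` of `θ x = 1`, `l f(x) = 0` with `f(x) ≠ 0` the rows of the Jacobian matrix
with respect to `x` are linearly independent: a relation `(u, w)` among the rows is trivial. -/
theorem left_kernel_trivial {n r : ℕ} {L ι κ : Type} [Field L] [Algebra ℚ L] [Fintype ι]
    [Fintype κ] (f : Fin r → MvPolynomial (Fin n) ℚ) (θ : ι → Fin n → L) (l : κ → Fin r → L)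
    (hD : ∀ (a : ι → Fin n → L) (b : κ → Fin r → L), ∃ D : Derivation ℚ L L,
      (∀ k j, D (θ k j) = a k j) ∧ ∀ k j, D (l k j) = b k j)
    (x : Fin n → L) (h1 : ∀ k, ∑ j, θ k j * x j = 1)
    (h2 : ∀ k, ∑ j, l k j * aeval x (f j) = 0) (h3 : ∃ j, aeval x (f j) ≠ 0)
    (u : ι → L) (w : κ → L)
    (huw : ∀ j, ∑ k, u k * θ k j + ∑ k, w k * ∑ m, l k m * aeval x (pderiv j (f m)) = 0) :
    u = 0 ∧ w = 0 := by
  classical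
  -- Differentiating the equations along `D` and pairing with `(u, w)` kills the terms in `D (x j)`.
  have key : ∀ (a : ι → Fin n → L) (b : κ → Fin r → L),
      ∑ k, u k * ∑ j, a k j * x j + ∑ k, w k * ∑ m, b k m * aeval x (f m) = 0 := by
    intro a b
    obtain ⟨D, hDa, hDb⟩ := hD a b
    have e1 : ∀ k, ∑ j, a k j * x j = - ∑ j, θ k j * D (x j) := by
      intro k
      have := congrArg D (h1 k)
      simp only [map_sum, Derivation.leibniz, hDa, smul_eq_mul, Derivation.map_one_eq_zero,
        Finset.sum_add_distrib] at this
      rw [eq_neg_iff_add_eq_zero, ← this, add_comm]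
      congr 1
      exact Finset.sum_congr rfl fun _ _ => mul_comm _ _
    have e2 : ∀ k, ∑ m, b k m * aeval x (f m) =
        - ∑ m, l k m * ∑ j, aeval x (pderiv j (f m)) * D (x j) := by
      intro k
      have := congrArg D (h2 k)
      simp only [map_sum, Derivation.leibniz, hDb, smul_eq_mul, map_zero,
        Finset.sum_add_distrib, derivation_aeval] at this
      rw [eq_neg_iff_add_eq_zero, ← this, add_comm]
      congr 1
      exact Finset.sum_congr rfl fun _ _ => mul_comm _ _
    have e3 : ∑ j, (∑ k, u k * θ k j + ∑ k, w k * ∑ m, l k m * aeval x (pderiv j (f m))) * D (x j)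
        = 0 := Finset.sum_eq_zero fun j _ => by rw [huw j, zero_mul]
    simp only [e1, e2]
    rw [← neg_eq_zero, ← e3]
    simp only [add_mul, Finset.sum_add_distrib, mul_neg, Finset.sum_neg_distrib, neg_add, neg_neg,
      Finset.mul_sum, Finset.sum_mul]
    congr 1
    · rw [Finset.sum_comm]
      exact Finset.sum_congr rfl fun _ _ => Finset.sum_congr rfl fun _ _ => by ring
    · symm
      rw [Finset.sum_comm]
      refine Finset.sum_congr rfl fun _ _ => ?_
      rw [Finset.sum_comm]
      exact Finset.sum_congr rfl fun _ _ => Finset.sum_congr rfl fun _ _ => by ring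
  constructor
  · ext k
    have hx : ∃ j, x j ≠ 0 := by
      by_contra! h
      simpa [h] using h1 k
    obtain ⟨j, hj⟩ := hx
    have := key (fun k' j' => if k' = k ∧ j' = j then 1 else 0) 0
    simpa [ite_and, hj] using this
  · ext k
    obtain ⟨j, hj⟩ := h3
    have := key 0 (fun k' j' => if k' = k ∧ j' = j then 1 else 0)
    simpa [ite_and, hj] using this

/-! ### Commutative algebra -/

/-- A form of the Nullstellensatz, over an algebraically closed extension `L` of `K`. -/
theorem nonempty_algHom_of_isAlgClosed {K C L : Type} [Field K] [CommRing C] [Nontrivial C]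
    [Algebra K C] [Algebra.FiniteType K C] [Field L] [Algebra K L] [IsAlgClosed L] :
    Nonempty (C →ₐ[K] L) := by
  obtain ⟨m, hm⟩ := Ideal.exists_maximal C
  let _ : Field (C ⧸ m) := Ideal.Quotient.field m
  have : Module.Finite K (C ⧸ m) := finite_of_finite_type_of_isJacobsonRing _ _
  have : Algebra.IsAlgebraic K (C ⧸ m) := .of_finite K _
  let φ : (C ⧸ m) →ₐ[K] L := IsAlgClosed.lift
  exact ⟨φ.comp (Ideal.Quotient.mkₐ K m)⟩

/-- A finitely generated algebra over a domain without geometric generic points is torsion: its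
unit is killed by a nonzero scalar. -/
theorem exists_ne_zero_of_isEmpty_algHom {A B L : Type} [CommRing A] [IsDomain A] [CommRing B]
    [Algebra A B] [Algebra.FiniteType A B] [Field L] [Algebra (FractionRing A) L] [Algebra A L]
    [IsScalarTower A (FractionRing A) L] [IsAlgClosed L] (h : IsEmpty (B →ₐ[A] L)) :
    ∃ c : A, c ≠ 0 ∧ algebraMap A B c = 0 := by
  let K := FractionRing A
  by_cases hn : Nontrivial (K ⊗[A] B)
  · exfalso
    obtain ⟨φ⟩ := nonempty_algHom_of_isAlgClosed (K := K) (C := K ⊗[A] B) (L := L)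
    exact h.false ((φ.restrictScalars A).comp Algebra.TensorProduct.includeRight)
  · rw [not_nontrivial_iff_subsingleton] at hn
    have hl : IsLocalizedModule (nonZeroDivisors A) (TensorProduct.mk A K B 1) :=
      (isLocalizedModule_iff_isBaseChange (nonZeroDivisors A) K _).mpr
        (TensorProduct.isBaseChange A B K)
    obtain ⟨s, hs⟩ := (IsLocalizedModule.eq_zero_iff (nonZeroDivisors A)
      (TensorProduct.mk A K B 1) (m := 1)).mp (Subsingleton.elim _ _)
    refine ⟨s, nonZeroDivisors.ne_zero s.2, ?_⟩
    rw [Algebra.algebraMap_eq_smul_one]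
    exact hs

/-- A finitely generated unramified `ℚ`-algebra `R` is finite étale, so `ℂ ⊗ R` is a product of
copies of `ℂ`, one for each `ℂ`-point. -/
theorem card_algHom_eq (R : Type) [CommRing R] [Algebra ℚ R] [Algebra.EssFiniteType ℚ R]
    [Algebra.FormallyUnramified ℚ R] : Nat.card (R →ₐ[ℚ] ℂ) = Module.finrank ℚ R := by
  have : Algebra.FormallyEtale ℚ R := .of_formallyUnramified_of_field ℚ R
  have := Algebra.FormallyUnramified.finite_of_free ℚ R
  let e := Algebra.FormallyEtale.equivPiOfIsSepClosed ℂ (ℂ ⊗[ℚ] R)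
  have hfin : Finite (PrimeSpectrum (ℂ ⊗[ℚ] R)) := by
    have : IsArtinianRing (ℂ ⊗[ℚ] R) := .of_finite ℂ _
    infer_instance
  cases nonempty_fintype (PrimeSpectrum (ℂ ⊗[ℚ] R))
  have h1 := e.toLinearEquiv.finrank_eq
  rw [Module.finrank_baseChange, Module.finrank_fintype_fun_eq_card, ← Nat.card_eq_fintype_card]
    at h1
  rw [h1]
  refine Nat.card_congr (Equiv.trans ?_ (Algebra.IsFiniteSplit.algHomEquivPrimeSpectrum ℂ _))
  exact Algebra.TensorProduct.liftEquivRight ℚ ℂ R ℂ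

/-- Generic freeness: if the generic fibre of a finitely generated `A`-algebra `B` is finite, then
there is a nonzero `c : A` such that all fibres of `B` over fields in which `c` is nonzero are
finite, of the same dimension. -/
theorem generic_finrank {A K τ B : Type} [CommRing A] [IsDomain A] [Finite τ] [CommRing B]
    [Algebra A B] (π : MvPolynomial τ A →ₐ[A] B) (hπ : Function.Surjective π)
    [Field K] [Algebra A K] [IsFractionRing A K] [Module.Finite K (K ⊗[A] B)] :
    ∃ c : A, c ≠ 0 ∧ ∃ g : ℕ, ∀ (F : Type) [Field F] [Algebra A F], algebraMap A F c ≠ 0 →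
      Module.Finite F (F ⊗[A] B) ∧ Module.finrank F (F ⊗[A] B) = g := by
  classical
  let inc : B →ₗ[A] K ⊗[A] B := TensorProduct.mk A K B 1
  have hl : IsLocalizedModule (nonZeroDivisors A) inc :=
    (isLocalizedModule_iff_isBaseChange (nonZeroDivisors A) K _).mpr
      (TensorProduct.isBaseChange A B K)
  have hspan : Submodule.span K (Set.range inc) = ⊤ := by
    rw [eq_top_iff]
    rintro z -
    induction z with
    | zero => exact Submodule.zero_mem _
    | add a b ha hb => exact Submodule.add_mem _ ha hb
    | tmul k y =>
      have : k ⊗ₜ[A] y = k • inc y := by simp [inc, TensorProduct.smul_tmul']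
      rw [this]
      exact Submodule.smul_mem _ _ (Submodule.subset_span ⟨y, rfl⟩)
  obtain ⟨s, hs, hsp, hli⟩ := exists_linearIndependent K (Set.range inc)
  have hfin : Finite s := hli.finite
  obtain ⟨g, ⟨e⟩⟩ := Finite.exists_equiv_fin s
  choose b hb using fun l : Fin g => hs (e.symm l).2
  have hli' : LinearIndependent K fun l => inc (b l) := by
    have h : (fun l => inc (b l)) = Subtype.val ∘ e.symm := funext hb
    rw [h]
    exact hli.comp _ e.symm.injective
  have hsp' : ⊤ ≤ Submodule.span K (Set.range fun l => inc (b l)) := by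
    rw [← hspan, ← hsp]
    apply Submodule.span_mono
    intro y hy
    exact ⟨e ⟨y, hy⟩, by simp [hb]⟩
  let φ : (Fin g → A) →ₗ[A] B := Fintype.linearCombination A b
  have hφ : Function.Injective φ := by
    rw [← LinearMap.ker_eq_bot, LinearMap.ker_eq_bot']
    intro a ha
    have := Fintype.linearIndependent_iff.mp hli' (fun l => algebraMap A K (a l)) (by
      have := congrArg inc ha
      simpa [φ, Fintype.linearCombination_apply] using this)
    ext l
    exact (FaithfulSMul.algebraMap_eq_zero_iff A K).mp (this l)
  have hden : ∀ y : B, ∃ d : A, d ≠ 0 ∧ d • y ∈ LinearMap.range φ := by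
    intro y
    obtain ⟨k, hk⟩ := (Submodule.mem_span_range_iff_exists_fun K).mp (hsp' (x := inc y) trivial)
    obtain ⟨d, hd⟩ := IsLocalization.exist_integer_multiples_of_finite (nonZeroDivisors A) k
    choose a ha using hd
    have : inc ((d : A) • y - φ a) = 0 := by
      rw [map_sub, map_smul, ← hk, sub_eq_zero]
      simp only [φ, Fintype.linearCombination_apply, map_sum, map_smul, Finset.smul_sum]
      refine Finset.sum_congr rfl fun l _ => ?_
      rw [← smul_assoc, ← ha l, algebraMap_smul]
    obtain ⟨d', hd'⟩ := (IsLocalizedModule.eq_zero_iff (nonZeroDivisors A) inc).mp this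
    refine ⟨d' * d, mul_ne_zero (nonZeroDivisors.ne_zero d'.2) (nonZeroDivisors.ne_zero d.2),
      (d' : A) • a, ?_⟩
    rw [map_smul, mul_smul, eq_comm, ← sub_eq_zero, ← smul_sub]
    exact hd'
  choose d hd0 hd using hden
  cases nonempty_fintype τ
  -- `c` is a common denominator for the unit and the products of the algebra generators with the
  -- basis `b`, so `b` spans `B` after inverting `c`.
  let c : A := d 1 * ∏ t : τ, ∏ l, d (π (X t) * b l)
  have hc : c ≠ 0 := mul_ne_zero (hd0 _)
    (Finset.prod_ne_zero_iff.mpr fun t _ => Finset.prod_ne_zero_iff.mpr fun l _ => hd0 _)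
  have hdvd : ∀ (a : A) (y : B), d y ∣ a → a • y ∈ LinearMap.range φ := by
    rintro _ y ⟨q, rfl⟩
    rw [mul_comm, mul_smul]
    exact Submodule.smul_mem _ _ (hd y)
  have hc1 : c • (1 : B) ∈ LinearMap.range φ := hdvd _ _ (dvd_mul_right _ _)
  have hcx : ∀ t, ∀ l, c • (π (X t) * b l) ∈ LinearMap.range φ := fun t l => hdvd _ _
    (dvd_mul_of_dvd_right ((Finset.dvd_prod_of_mem (fun l => d (π (X t) * b l))
      (Finset.mem_univ l)).trans (Finset.dvd_prod_of_mem (fun t => ∏ l, d (π (X t) * b l))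
      (Finset.mem_univ t))) _)
  have hall : ∀ y : B, ∃ k : ℕ, c ^ k • y ∈ LinearMap.range φ := by
    intro y
    obtain ⟨q, rfl⟩ := hπ y
    induction q using MvPolynomial.induction_on with
    | C a =>
      refine ⟨1, ?_⟩
      have : π (C a) = a • 1 := by
        rw [← MvPolynomial.algebraMap_eq, AlgHom.commutes, Algebra.algebraMap_eq_smul_one]
      rw [this, pow_one, smul_comm]
      exact Submodule.smul_mem _ _ hc1
    | add p q hp hq =>
      obtain ⟨k, hk⟩ := hp
      obtain ⟨m, hm⟩ := hq
      refine ⟨k + m, ?_⟩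
      rw [map_add, smul_add]
      refine Submodule.add_mem _ ?_ ?_
      · rw [add_comm, pow_add, mul_smul]; exact Submodule.smul_mem _ _ hk
      · rw [pow_add, mul_smul]; exact Submodule.smul_mem _ _ hm
    | mul_X p t hp =>
      obtain ⟨k, a, ha⟩ := hp
      refine ⟨k + 1, ?_⟩
      have : c ^ (k + 1) • π (p * X t) = ∑ l, a l • c • (π (X t) * b l) := by
        have e1 : c ^ (k + 1) • π (p * X t) = c • (π (X t) * (c ^ k • π p)) := by
          rw [map_mul, pow_succ', mul_smul, mul_smul_comm, mul_comm (π p)]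
        rw [e1, ← ha]
        simp only [φ, Fintype.linearCombination_apply, Finset.mul_sum, Finset.smul_sum,
          mul_smul_comm]
        exact Finset.sum_congr rfl fun l _ => smul_comm _ _ _
      rw [this]
      exact Submodule.sum_mem _ fun l _ => Submodule.smul_mem _ _ (hcx t l)
  refine ⟨c, hc, g, fun F _ _ hF => ?_⟩
  let Ac := Localization.Away c
  let loc := LocalizedModule.mkLinearMap (Submonoid.powers c) B
  have hreg : ∀ (s : Submonoid.powers c) (v w : Fin g → A), s • v = s • w → v = w := by
    rintro ⟨s, k, rfl⟩ v w h
    ext l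
    exact mul_left_cancel₀ (pow_ne_zero k hc) (congrFun h l)
  have hl2 : IsLocalizedModule (Submonoid.powers c) (loc ∘ₗ φ) :=
    { map_units := IsLocalizedModule.map_units loc
      surj := by
        intro y
        obtain ⟨⟨z, s⟩, hz⟩ := IsLocalizedModule.surj (Submonoid.powers c) loc y
        obtain ⟨k, a, ha⟩ := hall z
        refine ⟨(a, ⟨c ^ k, k, rfl⟩ * s), ?_⟩
        rw [LinearMap.comp_apply, ha, map_smul, mul_smul, hz]
        rfl
      exists_of_eq := by
        intro v w h
        obtain ⟨s, hs⟩ := IsLocalizedModule.exists_of_eq (S := Submonoid.powers c) (f := loc) h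
        refine ⟨s, hφ ?_⟩
        rw [LinearMap.map_smul_of_tower, LinearMap.map_smul_of_tower]
        exact hs }
  let E : Ac ⊗[A] (Fin g → A) ≃ₗ[Ac] Ac ⊗[A] B :=
    (IsLocalizedModule.isBaseChange (Submonoid.powers c) Ac (loc ∘ₗ φ)).equiv ≪≫ₗ
      (IsLocalizedModule.isBaseChange (Submonoid.powers c) Ac loc).equiv.symm
  let _ : Algebra Ac F := (IsLocalization.Away.lift c (isUnit_iff_ne_zero.mpr hF)).toAlgebra
  have : IsScalarTower A Ac F := .of_algebraMap_eq fun a =>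
    (IsLocalization.Away.lift_eq c (isUnit_iff_ne_zero.mpr hF) a).symm
  let E2 : F ⊗[A] (Fin g → A) ≃ₗ[F] F ⊗[A] B :=
    (TensorProduct.AlgebraTensorModule.cancelBaseChange A Ac F F _).symm ≪≫ₗ
      E.baseChange Ac F _ _ ≪≫ₗ TensorProduct.AlgebraTensorModule.cancelBaseChange A Ac F F _
  refine ⟨.equiv E2, ?_⟩
  rw [← E2.finrank_eq, Module.finrank_baseChange, Module.finrank_fin_fun]

/-! ### The polynomial system over a general ring -/

theorem map_aeval_rat {n : ℕ} {S S' : Type*} [CommRing S] [CommRing S'] [Algebra ℚ S]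
    [Algebra ℚ S'] (φ : S →+* S') (x : Fin n → S) (q : MvPolynomial (Fin n) ℚ) :
    φ (aeval x q) = aeval (fun j => φ (x j)) q :=
  comp_aeval_apply (fun j => x j) φ.toRatAlgHom q

/-- Index set of the entries of `(Θ, Λ, μ)`, in this order. -/
abbrev Par (n r i : ℕ) : Type := (Fin i × Fin n) ⊕ (Fin (n - i) × Fin r) ⊕ Fin r

section System

variable {n r i : ℕ} {S S' : Type} [CommRing S] [CommRing S'] [Algebra ℚ S] [Algebra ℚ S']

/-- The point `(x, t)` solves the system with parameters `p = (Θ, Λ, μ)` in the ring `S`: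
`Θ x = 1`, `Λ f(x) = 0` and `(μ · f(x)) t = 1`. -/
structure IsSol (f : Fin r → MvPolynomial (Fin n) ℚ) (p : Par n r i → S) (x : Fin n → S) (t : S) :
    Prop where
  lin : ∀ k : Fin i, ∑ j, p (.inl (k, j)) * x j = 1
  comb : ∀ k : Fin (n - i), ∑ m, p (.inr (.inl (k, m))) * aeval x (f m) = 0
  inv : (∑ m, p (.inr (.inr m)) * aeval x (f m)) * t = 1

theorem IsSol.map {f : Fin r → MvPolynomial (Fin n) ℚ} {p : Par n r i → S} {x : Fin n → S} {t : S}
    (h : IsSol f p x t) (φ : S →+* S') :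
    IsSol f (fun s => φ (p s)) (fun j => φ (x j)) (φ t) where
  lin k := by simpa using congrArg φ (h.lin k)
  comb k := by simpa [map_aeval_rat, -MvPolynomial.map_aeval] using congrArg φ (h.comb k)
  inv := by simpa [map_aeval_rat, -MvPolynomial.map_aeval] using congrArg φ h.inv

/-- The equations of the system with parameters `p`, in the variables `x` (`Sum.inl`) and `T`
(`Sum.inr`). -/
noncomputable def eqs (f : Fin r → MvPolynomial (Fin n) ℚ) (p : Par n r i → S) :
    (Fin i ⊕ Fin (n - i)) ⊕ Unit → MvPolynomial (Fin n ⊕ Unit) S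
  | .inl (.inl k) => (∑ j, C (p (.inl (k, j))) * X (.inl j)) - 1
  | .inl (.inr k) => ∑ m, C (p (.inr (.inl (k, m)))) * aeval (fun j => X (.inl j)) (f m)
  | .inr _ => 1 - (∑ m, C (p (.inr (.inr m))) * aeval (fun j => X (.inl j)) (f m)) * X (.inr ())

/-- The ideal of the system with parameters `p`: `satIdeal` over an arbitrary `ℚ`-algebra `S`. -/
noncomputable def sysIdeal (f : Fin r → MvPolynomial (Fin n) ℚ) (p : Par n r i → S) :
    Ideal (MvPolynomial (Fin n ⊕ Unit) S) := Ideal.span (Set.range (eqs f p))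

theorem map_eqs (f : Fin r → MvPolynomial (Fin n) ℚ) (p : Par n r i → S) (ψ : S →+* S') (e) :
    MvPolynomial.map ψ (eqs f p e) = eqs f (fun s => ψ (p s)) e := by
  rcases e with (k | k) | k <;> simp [eqs, map_aeval_rat, -MvPolynomial.map_aeval]

theorem map_sysIdeal (f : Fin r → MvPolynomial (Fin n) ℚ) (p : Par n r i → S) (ψ : S →+* S') :
    (sysIdeal f p).map (MvPolynomial.map ψ) = sysIdeal f (fun s => ψ (p s)) := by
  rw [sysIdeal, Ideal.map_span, ← Set.range_comp, sysIdeal]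
  congr 2
  ext1 e
  exact map_eqs f p ψ e

/-- Solutions of the system in `S'` are the ring maps from `S[x, T]` killing `sysIdeal`. -/
theorem isSol_iff (f : Fin r → MvPolynomial (Fin n) ℚ) (p : Par n r i → S)
    (φ : MvPolynomial (Fin n ⊕ Unit) S →+* S') :
    IsSol f (fun s => φ (C (p s))) (fun j => φ (X (.inl j))) (φ (X (.inr ()))) ↔
      ∀ q ∈ sysIdeal f p, φ q = 0 := by
  have : (∀ q ∈ sysIdeal f p, φ q = 0) ↔ ∀ e, φ (eqs f p e) = 0 := by
    change sysIdeal f p ≤ RingHom.ker φ ↔ _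
    rw [sysIdeal, Ideal.span_le, Set.range_subset_iff]
    rfl
  rw [this]
  constructor
  · intro h e
    rcases e with (k | k) | k
    · simpa [eqs, sub_eq_zero] using h.lin k
    · simpa [eqs, map_aeval_rat, -MvPolynomial.map_aeval] using h.comb k
    · simp only [eqs, map_sub, map_mul, map_sum, map_one, map_aeval_rat, h.inv, sub_self]
  · intro h
    refine ⟨fun k => ?_, fun k => ?_, ?_⟩
    · simpa [eqs, sub_eq_zero] using h (.inl (.inl k))
    · simpa [eqs, map_aeval_rat, -MvPolynomial.map_aeval] using h (.inl (.inr k))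
    · have := h (.inr ())
      simp only [eqs, map_sub, map_mul, map_sum, map_one, map_aeval_rat] at this
      exact (sub_eq_zero.mp this).symm

/-- The tautological solution in the quotient by `sysIdeal`. -/
theorem isSol_quot (f : Fin r → MvPolynomial (Fin n) ℚ) (p : Par n r i → S) :
    IsSol f (fun s => algebraMap S (MvPolynomial (Fin n ⊕ Unit) S ⧸ sysIdeal f p) (p s))
      (fun j => Ideal.Quotient.mk (sysIdeal f p) (X (.inl j)))
      (Ideal.Quotient.mk (sysIdeal f p) (X (.inr ()))) :=
  (isSol_iff f p (Ideal.Quotient.mk (sysIdeal f p))).mpr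
    fun _ hq => Ideal.Quotient.eq_zero_iff_mem.mpr hq

/-- The Jacobian matrix with respect to `x` of the `n` equations `Θ x = 1`, `Λ f(x) = 0`; the
bijection `e` numbers the equations by `Fin n`, making the matrix square. -/
noncomputable def jac (f : Fin r → MvPolynomial (Fin n) ℚ) (e : Fin n ≃ Fin i ⊕ Fin (n - i))
    (p : Par n r i → S) (x : Fin n → S) : Matrix (Fin n) (Fin n) S :=
  Matrix.of fun a j => Sum.elim (fun k => p (.inl (k, j)))
    (fun k => ∑ m, p (.inr (.inl (k, m))) * aeval x (pderiv j (f m))) (e a)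

theorem map_det_jac (f : Fin r → MvPolynomial (Fin n) ℚ) (e : Fin n ≃ Fin i ⊕ Fin (n - i))
    (p : Par n r i → S) (x : Fin n → S) (φ : S →+* S') :
    φ (jac f e p x).det = (jac f e (fun s => φ (p s)) (fun j => φ (x j))).det := by
  rw [RingHom.map_det]
  congr 1
  ext a j
  rcases h : e a with k | k <;> simp [jac, h, map_aeval_rat, -MvPolynomial.map_aeval]

/-- The Jacobian criterion: an `F`-algebra generated by a solution of the system at which the
Jacobian determinant is a unit is unramified. The differentials of `x` vanish by Cramer's rule, and
that of `t` because `t` is the inverse of a polynomial in `x`. -/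
theorem formallyUnramified_of_jac {F : Type} [CommRing F] [Algebra ℚ F] [Algebra F S]
    (f : Fin r → MvPolynomial (Fin n) ℚ)
    (e : Fin n ≃ Fin i ⊕ Fin (n - i)) (p : Par n r i → F) (y : Fin n ⊕ Unit → S)
    (hy : Function.Surjective (aeval (R := F) y))
    (h : IsSol f (fun s => algebraMap F S (p s)) (fun j => y (.inl j)) (y (.inr ())))
    (hJ : IsUnit (jac f e (fun s => algebraMap F S (p s)) (fun j => y (.inl j))).det) :
    Algebra.FormallyUnramified F S := by
  rw [Algebra.formallyUnramified_iff]
  have : IsScalarTower ℚ F S := inferInstance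
  let D := KaehlerDifferential.D F S
  let D' : Derivation ℚ S (Ω[S⁄F]) := D.restrictScalars ℚ
  set x : Fin n → S := fun j => y (.inl j) with hx
  set P : Par n r i → S := fun s => algebraMap F S (p s) with hP
  have hD'p : ∀ s, D' (P s) = 0 := fun s => D.map_algebraMap (p s)
  have hrow : ∀ a, ∑ j, jac f e P x a j • D' (x j) = 0 := by
    intro a
    rcases hk : e a with k | k
    · have := congrArg D' (h.lin k)
      simpa [jac, hk, hD'p] using this
    · have := congrArg D' (h.comb k)
      simp only [map_sum, Derivation.leibniz, hD'p, smul_zero, add_zero, map_zero,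
        derivation_aeval, Finset.smul_sum] at this
      rw [Finset.sum_comm] at this
      simpa [jac, hk, Finset.sum_smul, smul_smul] using this
  have hDx : ∀ j, D' (x j) = 0 := by
    intro b
    have h1 : (jac f e P x).det • D' (x b) = 0 := by
      have h2 : ∑ a, (jac f e P x).adjugate b a • ∑ j, jac f e P x a j • D' (x j) = 0 := by
        simp [hrow]
      simp only [Finset.smul_sum, smul_smul] at h2
      rw [Finset.sum_comm] at h2
      simp only [← Finset.sum_smul] at h2
      have h3 : ∀ j, ∑ a, (jac f e P x).adjugate b a * jac f e P x a j =
          if b = j then (jac f e P x).det else 0 := by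
        intro j
        rw [← Matrix.mul_apply, Matrix.adjugate_mul]
        simp [Matrix.one_apply]
      simpa [h3, ite_smul] using h2
    exact (hJ.smul_eq_zero).mp h1
  have hDt : D' (y (.inr ())) = 0 := by
    have h1 := congrArg D' h.inv
    simp only [Derivation.leibniz, map_sum, hD'p, derivation_aeval, hDx, smul_zero, add_zero,
      Finset.sum_const_zero, Derivation.map_one_eq_zero] at h1
    have h2 := congrArg (fun z => y (.inr ()) • z) h1
    simp only [smul_smul, smul_zero] at h2
    rwa [mul_comm, h.inv, one_smul] at h2
  have hD0 : ∀ z, D z = 0 := by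
    intro z
    obtain ⟨q, rfl⟩ := hy z
    induction q using MvPolynomial.induction_on with
    | C a => simp [D]
    | add p q hp hq => rw [map_add, map_add, hp, hq, add_zero]
    | mul_X q t hq =>
      have ht : D (y t) = 0 := by
        rcases t with j | ⟨⟩
        · exact hDx j
        · exact hDt
      simp [Derivation.leibniz, hq, ht]
  have htop := KaehlerDifferential.span_range_derivation F S
  have hbot : Submodule.span S (Set.range (KaehlerDifferential.D F S)) = ⊥ := by
    rw [Submodule.span_eq_bot]
    rintro _ ⟨z, rfl⟩
    exact hD0 z
  rw [hbot] at htop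
  exact (Submodule.subsingleton_iff S).mp (subsingleton_of_bot_eq_top htop)

end System

/-! ### Generic parameters and spreading out -/

section Generic

variable {n r i : ℕ}

/-- If `h` vanishes at no solution of the system in `L`, an algebraically closed field over `Frac
A`, then some nonzero `c : A` is a multiple of `h` modulo the equations, that is, at every solution
in every ring. -/
theorem exists_dvd (f : Fin r → MvPolynomial (Fin n) ℚ) {A : Type} [CommRing A] [IsDomain A]
    [Algebra ℚ A] (p : Par n r i → A) (h : MvPolynomial (Fin n ⊕ Unit) A)
    (L : Type) [Field L] [Algebra ℚ L] [Algebra (FractionRing A) L] [Algebra A L]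
    [IsScalarTower A (FractionRing A) L] [IsAlgClosed L]
    (H : ∀ φ : MvPolynomial (Fin n ⊕ Unit) A →ₐ[A] L,
      IsSol f (fun s => algebraMap A L (p s)) (fun j => φ (X (.inl j))) (φ (X (.inr ()))) →
        φ h ≠ 0) :
    ∃ c : A, c ≠ 0 ∧ ∀ (S : Type) [CommRing S] [Algebra ℚ S]
      (φ : MvPolynomial (Fin n ⊕ Unit) A →+* S),
      IsSol f (fun s => φ (C (p s))) (fun j => φ (X (.inl j))) (φ (X (.inr ()))) →
        φ h ∣ φ (C c) := by
  let I := sysIdeal f p ⊔ Ideal.span {h}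
  obtain ⟨c, hc, hcI⟩ := exists_ne_zero_of_isEmpty_algHom (A := A)
    (B := MvPolynomial (Fin n ⊕ Unit) A ⧸ I) (L := L)
    ⟨fun ψ => by
      let φ : MvPolynomial (Fin n ⊕ Unit) A →ₐ[A] L := ψ.comp (Ideal.Quotient.mkₐ A I)
      have hφ : ∀ q ∈ I, φ q = 0 := fun q hq => by
        have : Ideal.Quotient.mkₐ A I q = 0 := Ideal.Quotient.eq_zero_iff_mem.mpr hq
        change ψ (Ideal.Quotient.mkₐ A I q) = 0
        rw [this, map_zero]
      refine H φ ?_ (hφ h (Ideal.mem_sup_right (Ideal.mem_span_singleton_self h)))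
      have := (isSol_iff f p (φ : MvPolynomial (Fin n ⊕ Unit) A →+* L)).mpr
        fun q hq => hφ q (Ideal.mem_sup_left hq)
      simpa [← MvPolynomial.algebraMap_eq] using this⟩
  refine ⟨c, hc, fun S _ _ φ hφ => ?_⟩
  have hmem : C c ∈ I := Ideal.Quotient.eq_zero_iff_mem.mp hcI
  obtain ⟨a, ha, b, hb, hab⟩ := Submodule.mem_sup.mp hmem
  obtain ⟨q, rfl⟩ := Ideal.mem_span_singleton'.mp hb
  rw [← hab, map_add, (isSol_iff f p φ).mp hφ a ha, zero_add, map_mul]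
  exact dvd_mul_left _ _

/-- Base change of a quotient of a polynomial ring along `A → F`. -/
noncomputable def baseChangeEquiv {A F τ : Type} [CommRing A] [CommRing F] [Algebra A F]
    (I : Ideal (MvPolynomial τ A)) :
    F ⊗[A] (MvPolynomial τ A ⧸ I) ≃ₐ[F]
      MvPolynomial τ F ⧸ I.map (MvPolynomial.map (algebraMap A F)) :=
  (Algebra.TensorProduct.tensorQuotientEquiv F (MvPolynomial τ A) F I).trans
    (Ideal.quotientEquivAlg _ _ (algebraTensorAlgEquiv A F) (by
      have h : (algebraTensorAlgEquiv (σ := τ) A F).toRingEquiv.toRingHom.comp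
          (Algebra.TensorProduct.includeRight :
            MvPolynomial τ A →ₐ[A] F ⊗[A] MvPolynomial τ A).toRingHom =
            MvPolynomial.map (algebraMap A F) := by
        refine MvPolynomial.ringHom_ext (fun a => ?_) (fun x => ?_) <;> simp
      rw [← h, ← Ideal.map_map]
      rfl))

theorem satIdeal_eq (f : Fin r → MvPolynomial (Fin n) ℚ) (Θ : Matrix (Fin i) (Fin n) ℚ)
    (Λ : Matrix (Fin (n - i)) (Fin r) ℚ) (μ : Fin r → ℚ) :
    satIdeal i f Θ Λ μ =
      sysIdeal f (Sum.elim (fun q => Θ q.1 q.2) (Sum.elim (fun q => Λ q.1 q.2) μ)) := by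
  have hr : ∀ q : MvPolynomial (Fin n) ℚ, rename (Sum.inl : Fin n → Fin n ⊕ Unit) q =
      aeval (fun j => X (.inl j)) q := fun q => by
    induction q using MvPolynomial.induction_on <;> simp_all
  rw [satIdeal, sysIdeal]
  congr 1
  ext q
  simp only [Set.mem_union, Set.mem_range, Set.mem_singleton_iff, Sum.exists, eqs, hr,
    Sum.elim_inl, Sum.elim_inr, Unique.exists_iff, @eq_comm _ q]

/-- `left_kernel_trivial` for generic parameters. The map `ρ` selects which of the parameters `Λ`,
`μ` are the coefficients of the linear combinations of `f` set to zero. -/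
theorem generic_rows (f : Fin r → MvPolynomial (Fin n) ℚ) {L : Type} [Field L] [Algebra ℚ L]
    [Algebra (MvPolynomial (Par n r i) ℚ) L] [IsScalarTower ℚ (MvPolynomial (Par n r i) ℚ) L]
    [Algebra.FormallyEtale (MvPolynomial (Par n r i) ℚ) L] {κ : Type} [Fintype κ]
    (ρ : κ × Fin r → (Fin (n - i) × Fin r) ⊕ Fin r) (hρ : Function.Injective ρ)
    (x : Fin n → L)
    (h1 : ∀ k : Fin i, ∑ j, algebraMap (MvPolynomial (Par n r i) ℚ) L (X (.inl (k, j))) * x j = 1)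
    (h2 : ∀ k : κ, ∑ m, algebraMap (MvPolynomial (Par n r i) ℚ) L (X (.inr (ρ (k, m)))) *
      aeval x (f m) = 0)
    (h3 : ∃ m, aeval x (f m) ≠ 0) (u : Fin i → L) (w : κ → L)
    (huw : ∀ j, ∑ k, u k * algebraMap (MvPolynomial (Par n r i) ℚ) L (X (.inl (k, j))) +
      ∑ k, w k * ∑ m, algebraMap (MvPolynomial (Par n r i) ℚ) L (X (.inr (ρ (k, m)))) *
        aeval x (pderiv j (f m)) = 0) :
    u = 0 ∧ w = 0 := by
  refine left_kernel_trivial f _ _ (fun a b => ?_) x h1 h2 h3 u w huw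
  obtain ⟨D, hD⟩ := exists_derivation L (σ := Par n r i) (Sum.elim (fun q => a q.1 q.2)
    (Function.extend ρ (fun q => b q.1 q.2) 0))
  refine ⟨D, fun k j => by simp [hD], fun k j => ?_⟩
  rw [hD, Sum.elim_inr, hρ.extend_apply]

/-- With generic parameters, the Jacobian determinant is nonzero at every solution. -/
theorem jac_det_ne_zero (f : Fin r → MvPolynomial (Fin n) ℚ) {L : Type} [Field L] [Algebra ℚ L]
    [Algebra (MvPolynomial (Par n r i) ℚ) L] [IsScalarTower ℚ (MvPolynomial (Par n r i) ℚ) L]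
    [Algebra.FormallyEtale (MvPolynomial (Par n r i) ℚ) L] (e : Fin n ≃ Fin i ⊕ Fin (n - i))
    {x : Fin n → L} {t : L}
    (h : IsSol f (fun s => algebraMap (MvPolynomial (Par n r i) ℚ) L (X s)) x t) :
    (jac f e (fun s => algebraMap (MvPolynomial (Par n r i) ℚ) L (X s)) x).det ≠ 0 := by
  intro h0
  obtain ⟨v, hv, hvM⟩ := Matrix.exists_vecMul_eq_zero_iff.mpr h0
  have h3 : ∃ m, aeval x (f m) ≠ 0 := by
    by_contra! h'
    simpa [h'] using h.inv
  obtain ⟨hu, hw⟩ := generic_rows f (fun q : Fin (n - i) × Fin r => .inl q) Sum.inl_injective x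
    h.lin h.comb h3 (fun k => v (e.symm (.inl k))) (fun k => v (e.symm (.inr k))) (fun j => by
      have := congrFun hvM j
      rw [Matrix.vecMul, dotProduct, ← Equiv.sum_comp e.symm, Fintype.sum_sum_type] at this
      simpa [jac] using this)
  apply hv
  ext a
  rcases ha : e a with k | k
  · simpa [← ha] using congrFun hu k
  · simpa [← ha] using congrFun hw k

/-- With generic parameters, `μ · f` vanishes at no point of `{Θ x = 1, Λ f(x) = 0}` off `X`: the
Jacobian would have `n + 1` independent rows in an `n`-dimensional space. -/
theorem no_extra_solution (f : Fin r → MvPolynomial (Fin n) ℚ) (hi : i ≤ n) {L : Type} [Field L]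
    [Algebra ℚ L]
    [Algebra (MvPolynomial (Par n r i) ℚ) L] [IsScalarTower ℚ (MvPolynomial (Par n r i) ℚ) L]
    [Algebra.FormallyEtale (MvPolynomial (Par n r i) ℚ) L] (x : Fin n → L)
    (h1 : ∀ k : Fin i, ∑ j, algebraMap (MvPolynomial (Par n r i) ℚ) L (X (.inl (k, j))) * x j = 1)
    (h2 : ∀ k : Fin (n - i), ∑ m, algebraMap (MvPolynomial (Par n r i) ℚ) L
      (X (.inr (.inl (k, m)))) * aeval x (f m) = 0)
    (h3 : ∃ m, aeval x (f m) ≠ 0) :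
    ∑ m, algebraMap (MvPolynomial (Par n r i) ℚ) L (X (.inr (.inr m))) * aeval x (f m) ≠ 0 := by
  intro h0
  let ρ : (Fin (n - i) ⊕ Unit) × Fin r → (Fin (n - i) × Fin r) ⊕ Fin r :=
    fun q => Sum.elim (fun k => .inl (k, q.2)) (fun _ => .inr q.2) q.1
  have hρ : Function.Injective ρ := by
    rintro ⟨k | k, m⟩ ⟨k' | k', m'⟩ h <;> simp_all [ρ]
  let M : Fin i ⊕ (Fin (n - i) ⊕ Unit) → Fin n → L :=
    Sum.elim (fun k j => algebraMap (MvPolynomial (Par n r i) ℚ) L (X (.inl (k, j))))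
      (fun k j => ∑ m, algebraMap (MvPolynomial (Par n r i) ℚ) L (X (.inr (ρ (k, m)))) *
        aeval x (pderiv j (f m)))
  have hM : LinearIndependent L M := by
    rw [Fintype.linearIndependent_iff]
    intro v hv
    obtain ⟨hu, hw⟩ := generic_rows f ρ hρ x h1
      (by rintro (k | k) <;> [exact h2 k; exact h0]) h3 (fun k => v (.inl k)) (fun k => v (.inr k))
      (fun j => by
        have := congrFun hv j
        rw [Fintype.sum_sum_type] at this
        simpa [M] using this)
    rintro (k | k)
    · exact congrFun hu k
    · exact congrFun hw k
  have := hM.fintype_card_le_finrank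
  simp at this
  omega

end Generic

section Assembly

variable {n r i : ℕ}

theorem aeval_mk_surjective {F τ : Type} [CommRing F] (I : Ideal (MvPolynomial τ F)) :
    Function.Surjective
      (aeval (R := F) fun s => (Ideal.Quotient.mk I (X s) : MvPolynomial τ F ⧸ I)) := by
  have : aeval (R := F) (fun s => (Ideal.Quotient.mk I (X s) : MvPolynomial τ F ⧸ I)) =
      Ideal.Quotient.mkₐ F I := by
    ext s; simp
  rw [this]
  exact Ideal.Quotient.mkₐ_surjective F I

/-- There is a nonzero polynomial `c` in the parameters such that the Jacobian determinant at any
solution over any ring divides the value of `c`. -/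
theorem exists_jac_dvd (f : Fin r → MvPolynomial (Fin n) ℚ) (e : Fin n ≃ Fin i ⊕ Fin (n - i)) :
    ∃ c : MvPolynomial (Par n r i) ℚ, c ≠ 0 ∧ ∀ (S : Type) [CommRing S] [Algebra ℚ S]
      (φ : MvPolynomial (Par n r i) ℚ →+* S) (x : Fin n → S) (t : S),
      IsSol f (fun s => φ (X s)) x t → (jac f e (fun s => φ (X s)) x).det ∣ φ c := by
  let A := MvPolynomial (Par n r i) ℚ
  let K := FractionRing A
  let L := AlgebraicClosure K
  have : Algebra.FormallyEtale A K := .of_isLocalization (nonZeroDivisors A)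
  have : Algebra.FormallyEtale K L := .of_isSeparable K L
  have : Algebra.FormallyEtale A L := .comp A K L
  have : IsScalarTower ℚ A L := inferInstance
  obtain ⟨c, hc, h⟩ := exists_dvd f (A := A) (fun s => X s)
    (jac (S := MvPolynomial (Fin n ⊕ Unit) A) f e (fun s => C (X s)) (fun j => X (.inl j))).det L
    (fun φ hφ => by
      have := map_det_jac f e (fun s => C (X s)) (fun j => X (.inl j))
        (φ : MvPolynomial (Fin n ⊕ Unit) A →+* L)
      intro h0
      refine jac_det_ne_zero f e hφ ?_
      rw [← h0]
      simpa [← MvPolynomial.algebraMap_eq] using this.symm)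
  refine ⟨c, hc, fun S _ _ φ x t hs => ?_⟩
  have := h S (eval₂Hom φ (Sum.elim x fun _ => t)) (by simpa using hs)
  rw [map_det_jac] at this
  simpa using this

/-- There is a nonzero polynomial `c` in the parameters such that, wherever `Θ x = 1`, `Λ f(x) = 0`
and `f j₀ (x)` is invertible, `μ · f(x)` divides the value of `c`. -/
theorem exists_comb_dvd (f : Fin r → MvPolynomial (Fin n) ℚ) (hi : i ≤ n) (j₀ : Fin r) :
    ∃ c : MvPolynomial (Par n r i) ℚ, c ≠ 0 ∧ ∀ (S : Type) [CommRing S] [Algebra ℚ S]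
      (φ : MvPolynomial (Par n r i) ℚ →+* S) (x : Fin n → S) (t : S),
      (∀ k : Fin i, ∑ j, φ (X (.inl (k, j))) * x j = 1) →
      (∀ k : Fin (n - i), ∑ m, φ (X (.inr (.inl (k, m)))) * aeval x (f m) = 0) →
      aeval x (f j₀) * t = 1 →
      (∑ m, φ (X (.inr (.inr m))) * aeval x (f m)) ∣ φ c := by
  classical
  let A := MvPolynomial (Par n r i) ℚ
  let K := FractionRing A
  let L := AlgebraicClosure K
  have : Algebra.FormallyEtale A K := .of_isLocalization (nonZeroDivisors A)
  have : Algebra.FormallyEtale K L := .of_isSeparable K L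
  have : Algebra.FormallyEtale A L := .comp A K L
  have : IsScalarTower ℚ A L := inferInstance
  -- Replacing `μ` by the `j₀`-th basis vector turns the last equation into `f j₀ (x) * T = 1`.
  obtain ⟨c, hc, h⟩ := exists_dvd f (A := A) (Sum.elim (fun s => X (.inl s))
      (Sum.elim (fun s => X (.inr (.inl s))) (Pi.single j₀ 1)) : Par n r i → A)
    (∑ m, C (X (.inr (.inr m))) * aeval (fun j => X (.inl j)) (f m)) L (fun φ hφ => by
      have h1 := hφ.lin
      have h2 := hφ.comb
      have h3 := hφ.inv
      simp only [Sum.elim_inl, Sum.elim_inr] at h1 h2 h3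
      have := no_extra_solution f hi _ h1 h2 ⟨j₀, fun h0 => by
        simp [Pi.single_apply, apply_ite, ite_mul, h0] at h3⟩
      intro h0
      apply this
      rw [← h0, map_sum]
      refine Finset.sum_congr rfl fun m _ => ?_
      rw [map_mul, ← MvPolynomial.algebraMap_eq, AlgHom.commutes]
      congr 1
      exact (map_aeval_rat (φ : MvPolynomial (Fin n ⊕ Unit) A →+* L) _ _).symm)
  refine ⟨c, hc, fun S _ _ φ x t h1 h2 h3 => ?_⟩
  have := h S (eval₂Hom φ (Sum.elim x fun _ => t)) ⟨by simpa using h1, by simpa using h2, by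
    simpa [Pi.single_apply, apply_ite, ite_mul] using h3⟩
  simp only [map_sum, map_mul, map_aeval_rat] at this
  simpa using this

theorem formallyUnramified_quot {F : Type} [Field F] [Algebra ℚ F]
    (f : Fin r → MvPolynomial (Fin n) ℚ) (e : Fin n ≃ Fin i ⊕ Fin (n - i))
    (ψ : MvPolynomial (Par n r i) ℚ →+* F) (c : MvPolynomial (Par n r i) ℚ)
    (hc : ∀ (S : Type) [CommRing S] [Algebra ℚ S]
      (φ : MvPolynomial (Par n r i) ℚ →+* S) (x : Fin n → S) (t : S),
      IsSol f (fun s => φ (X s)) x t → (jac f e (fun s => φ (X s)) x).det ∣ φ c)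
    (h0 : ψ c ≠ 0) :
    Algebra.FormallyUnramified F
      (MvPolynomial (Fin n ⊕ Unit) F ⧸ sysIdeal f (fun s => ψ (X s))) := by
  have hs := isSol_quot f (fun s => ψ (X s))
  refine formallyUnramified_of_jac f e (fun s => ψ (X s)) _ (aeval_mk_surjective _) hs ?_
  have hdvd := hc _ ((algebraMap F (MvPolynomial (Fin n ⊕ Unit) F ⧸
    sysIdeal f (fun s => ψ (X s)))).comp ψ) _ _ hs
  rw [RingHom.comp_apply] at hdvd
  exact isUnit_of_dvd_unit hdvd ((IsUnit.mk0 (ψ c) h0).map (algebraMap F _))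

end Assembly

/-! ### Complex points of the specialised system -/

section Points

variable {n r i : ℕ}

/-- If `μ · f` vanishes nowhere on `{Θ x = 1, Λ f(x) = 0}` off `X`, then the `ℂ`-points of the
quotient by `sysIdeal` are in bijection with that set through their `x`-coordinates. -/
theorem exists_points (f : Fin r → MvPolynomial (Fin n) ℚ) (p : Par n r i → ℚ)
    (hμ : ∀ x : Fin n → ℂ, (∀ k : Fin i, ∑ j, (p (.inl (k, j)) : ℂ) * x j = 1) →
      (∀ k : Fin (n - i), ∑ m, (p (.inr (.inl (k, m))) : ℂ) * aeval x (f m) = 0) →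
      (∃ m, aeval x (f m) ≠ 0) → ∑ m, (p (.inr (.inr m)) : ℂ) * aeval x (f m) ≠ 0) :
    ∃ Φ : ((MvPolynomial (Fin n ⊕ Unit) ℚ ⧸ sysIdeal f p) →ₐ[ℚ] ℂ) → Fin n → ℂ,
      Function.Injective Φ ∧ Set.range Φ =
        {x : Fin n → ℂ | (∀ k : Fin i, ∑ j, (p (.inl (k, j)) : ℂ) * x j = 1) ∧
          ∀ k : Fin (n - i), ∑ m, (p (.inr (.inl (k, m))) : ℂ) * aeval x (f m) = 0} \
        {x : Fin n → ℂ | ∀ m, aeval x (f m) = 0} := by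
  have hsol : ∀ φ : (MvPolynomial (Fin n ⊕ Unit) ℚ ⧸ sysIdeal f p) →ₐ[ℚ] ℂ,
      IsSol f (fun s => (p s : ℂ)) (fun j => φ (Ideal.Quotient.mk _ (X (.inl j))))
        (φ (Ideal.Quotient.mk _ (X (.inr ())))) := fun φ => by
    simpa using (isSol_quot f p).map (φ : _ →+* ℂ)
  refine ⟨fun φ j => φ (Ideal.Quotient.mk _ (X (.inl j))), fun φ φ' h => ?_, ?_⟩
  · have hx : ∀ j, φ (Ideal.Quotient.mk _ (X (.inl j))) = φ' (Ideal.Quotient.mk _ (X (.inl j))) :=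
      congrFun h
    have h1 := (hsol φ).inv
    have h2 := (hsol φ').inv
    simp only [← hx] at h2
    have ht := mul_left_cancel₀ (left_ne_zero_of_mul_eq_one h1) (h1.trans h2.symm)
    refine Ideal.Quotient.algHom_ext _ (MvPolynomial.algHom_ext ?_)
    rintro (j | ⟨⟩)
    · exact hx j
    · exact ht
  · ext x
    constructor
    · rintro ⟨φ, rfl⟩
      refine ⟨⟨(hsol φ).lin, (hsol φ).comb⟩, fun h0 => ?_⟩
      have h0' : ∀ m, aeval (fun j => φ (Ideal.Quotient.mk _ (X (.inl j)))) (f m) = 0 := h0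
      simpa only [h0', mul_zero, Finset.sum_const_zero, zero_mul, zero_ne_one] using (hsol φ).inv
    · rintro ⟨⟨h1, h2⟩, h3⟩
      have h3' : ∃ m, aeval x (f m) ≠ 0 := by simpa using h3
      let φ₀ : MvPolynomial (Fin n ⊕ Unit) ℚ →ₐ[ℚ] ℂ := aeval (Sum.elim x fun _ =>
        (∑ m, (p (.inr (.inr m)) : ℂ) * aeval x (f m))⁻¹)
      have hφ₀ : ∀ q ∈ sysIdeal f p, φ₀ q = 0 :=
        (isSol_iff f p (φ₀ : MvPolynomial (Fin n ⊕ Unit) ℚ →+* ℂ)).mp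
          ⟨by simpa [φ₀] using h1, by simpa [φ₀] using h2, by
            simpa [φ₀] using mul_inv_cancel₀ (hμ x h1 h2 h3')⟩
      refine ⟨Ideal.Quotient.liftₐ _ φ₀ hφ₀, ?_⟩
      ext j
      change φ₀ (X (.inl j)) = x j
      simp [φ₀]

end Points

/-- Theorem 4.2 of the paper, affine version of Helmer's Thm. 4.1.
There exist a nonzero polynomial `c` in the `i·n + (n−i)·r + r` parameter entries of
`(Θ,Λ,μ)` and `g_i ∈ ℕ` such that whenever `c(Θ,Λ,μ) ≠ 0`, the quotient
`ℚ[x₁,…,xₙ,T]/I_i(Θ,Λ,μ)` is a finite-dimensional `ℚ`-vector space of dimension exactly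
`g_i`, and the set `{x ∈ ℂⁿ : Θ·x = 1, Λ·f(x) = 0} \ X` is finite with exactly `g_i`
elements. -/
theorem generic_saturation_count (n r : ℕ) (i : ℕ) (hi : i < n)
    (f : Fin r → MvPolynomial (Fin n) ℚ) :
    ∃ (c : MvPolynomial ((Fin i × Fin n) ⊕ (Fin (n - i) × Fin r) ⊕ Fin r) ℚ),
      c ≠ 0 ∧
      ∃ gi : ℕ,
        ∀ (Θ : Matrix (Fin i) (Fin n) ℚ) (Λ : Matrix (Fin (n - i)) (Fin r) ℚ)
          (μ : Fin r → ℚ),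
          eval (Sum.elim (fun p => Θ p.1 p.2)
              (Sum.elim (fun p => Λ p.1 p.2) μ)) c ≠ 0 →
            Module.Finite ℚ
                (MvPolynomial (Fin n ⊕ Unit) ℚ ⧸ satIdeal i f Θ Λ μ) ∧
              Module.finrank ℚ
                  (MvPolynomial (Fin n ⊕ Unit) ℚ ⧸ satIdeal i f Θ Λ μ) = gi ∧
              ({x : Fin n → ℂ |
                    (∀ k : Fin i, ∑ j : Fin n, (Θ k j : ℂ) * x j = 1) ∧
                      ∀ k : Fin (n - i), ∑ j : Fin r, (Λ k j : ℂ) * aeval x (f j) = 0} \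
                  {x : Fin n → ℂ | ∀ j : Fin r, aeval x (f j) = 0}).Finite ∧
              ({x : Fin n → ℂ |
                    (∀ k : Fin i, ∑ j : Fin n, (Θ k j : ℂ) * x j = 1) ∧
                      ∀ k : Fin (n - i), ∑ j : Fin r, (Λ k j : ℂ) * aeval x (f j) = 0} \
                  {x : Fin n → ℂ | ∀ j : Fin r, aeval x (f j) = 0}).ncard = gi := by
  classical
  let A := MvPolynomial (Par n r i) ℚ
  let K := FractionRing A
  let e : Fin n ≃ Fin i ⊕ Fin (n - i) := (finCongr (by omega)).trans finSumFinEquiv.symm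
  obtain ⟨c₁, hc₁, hJ⟩ := exists_jac_dvd f e
  choose d hd hdvd using exists_comb_dvd f hi.le
  let I : Ideal (MvPolynomial (Fin n ⊕ Unit) A) := sysIdeal f (fun s => (X s : A))
  have hfin : Module.Finite K (K ⊗[A] (MvPolynomial (Fin n ⊕ Unit) A ⧸ I)) := by
    have hunr := formallyUnramified_quot f e (algebraMap A K) c₁ hJ
      (fun h => hc₁ (IsFractionRing.injective A K (h.trans (map_zero _).symm)))
    rw [← map_sysIdeal f (fun s => (X s : A)) (algebraMap A K)] at hunr
    have := Algebra.FormallyUnramified.finite_of_free K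
      (MvPolynomial (Fin n ⊕ Unit) K ⧸ I.map (MvPolynomial.map (algebraMap A K)))
    exact Module.Finite.equiv (baseChangeEquiv I).symm.toLinearEquiv
  obtain ⟨c₀, hc₀, g, hg⟩ := generic_finrank (A := A) (K := K) (τ := Fin n ⊕ Unit)
    (B := MvPolynomial (Fin n ⊕ Unit) A ⧸ I) (Ideal.Quotient.mkₐ A I)
    (Ideal.Quotient.mkₐ_surjective A I)
  refine ⟨c₀ * c₁ * ∏ j, d j, mul_ne_zero (mul_ne_zero hc₀ hc₁)
    (Finset.prod_ne_zero_iff.mpr fun j _ => hd j), g, fun Θ Λ μ hne => ?_⟩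
  rw [satIdeal_eq]
  set p : Par n r i → ℚ := Sum.elim (fun q => Θ q.1 q.2) (Sum.elim (fun q => Λ q.1 q.2) μ) with hp
  rw [map_mul, map_mul, map_prod] at hne
  have hne₀ := left_ne_zero_of_mul (left_ne_zero_of_mul hne)
  have hne₁ := right_ne_zero_of_mul (left_ne_zero_of_mul hne)
  have hneD : ∀ j, eval p (d j) ≠ 0 := fun j =>
    Finset.prod_ne_zero_iff.mp (right_ne_zero_of_mul hne) j (Finset.mem_univ j)
  have hpX : (fun s => eval p (X s)) = p := by ext s; simp
  have hunr : Algebra.FormallyUnramified ℚ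
      (MvPolynomial (Fin n ⊕ Unit) ℚ ⧸ sysIdeal f p) := by
    have := formallyUnramified_quot f e (eval p) c₁ hJ hne₁
    rwa [hpX] at this
  have hdim : Module.finrank ℚ (MvPolynomial (Fin n ⊕ Unit) ℚ ⧸ sysIdeal f p) = g := by
    let _ : Algebra A ℚ := (eval p).toAlgebra
    have hI : I.map (MvPolynomial.map (algebraMap A ℚ)) = sysIdeal f p := by
      have := map_sysIdeal f (fun s => (X s : A)) (eval p)
      rwa [hpX] at this
    rw [← hI, ← (baseChangeEquiv I).toLinearEquiv.finrank_eq]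
    exact (hg ℚ hne₀).2
  have hmodfin := Algebra.FormallyUnramified.finite_of_free ℚ
    (MvPolynomial (Fin n ⊕ Unit) ℚ ⧸ sysIdeal f p)
  obtain ⟨Φ, hΦ, hrange⟩ := exists_points f p (fun x h1 h2 h3 h0 => by
    obtain ⟨m, hm⟩ := h3
    have := hdvd m ℂ ((algebraMap ℚ ℂ).comp (eval p)) x (aeval x (f m))⁻¹ (by simpa using h1)
      (by simpa using h2) (mul_inv_cancel₀ hm)
    simp only [RingHom.comp_apply, eval_X, eq_ratCast, h0, zero_dvd_iff, Rat.cast_eq_zero] at this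
    exact hneD m this)
  refine ⟨hmodfin, hdim, ?_⟩
  have hset : Set.range Φ = {x : Fin n → ℂ |
        (∀ k : Fin i, ∑ j : Fin n, (Θ k j : ℂ) * x j = 1) ∧
          ∀ k : Fin (n - i), ∑ j : Fin r, (Λ k j : ℂ) * aeval x (f j) = 0} \
      {x : Fin n → ℂ | ∀ j : Fin r, aeval x (f j) = 0} := hrange
  rw [← hset]
  refine ⟨Set.finite_range Φ, ?_⟩
  rw [← Nat.card_coe_set_eq, Nat.card_range_of_injective hΦ, card_algHom_eq, hdim]
end

section
/- Let H_1,…,H_m ∈ ℚ[p_1,…,p_ℓ][x_1,…,x_n], let 𝔎 = ℚ(p_1,…,p_ℓ), let I ⊆ 𝔎[x_1,…,x_n] be the ideal generated by the images of H_1,…,H_m, and for p* ∈ ℂ^ℓ let I_{p*} ⊆ ℂ[x_1,…,x_n] be the ideal generated by the specializations H_1(p*),…,H_m(p*). Then for every d ≥ 0 there exists a nonzero polynomial c_d ∈ ℚ[p_1,…,p_ℓ] such that for all p* ∈ ℂ^ℓ with c_d(p*) ≠ 0 one has HF_{I_{p*}}(d) = HF_I(d), i.e., dim_ℂ((I_{p*})_{≤d})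 = dim_𝔎(I_{≤d}). -/
/-!
The degree-`≤ d` dimension of an ideal over a field is the number of its leading monomials of degree
at most `d`, for a graded monomial order (degree-lexicographic here). So it suffices that a generic
specialization does not change the set of leading monomials.

Write `A = ℚ[p]` and `J = (H₁,…,H_m) ⊆ A[x]`, and let `S` be the set of leading monomials of `J`.
By Dickson's lemma there are elements `g s ∈ J` with leading monomial `s`, for all `s ∈ S`, whose
leading coefficients all divide one nonzero `c ∈ A` (`exists_leading_family`). If `φ : A → K` is a
ring homomorphism to a field with `φ c ≠ 0`, then the `φ (g s)` still have leading monomial `s`, and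
by pseudo-division they span over `K` the ideal generated by the `φ (H j)` (`map_mem_span`,
`span_map_le`). Hence its degree-`≤ d` part has dimension `#{s ∈ S : |s| ≤ d}`
(`finrank_span_inf_restrictTotalDegree`), which does not depend on `φ`. This applies both to the
inclusion of `A` in its fraction field and to evaluation at a point `p*` with `c(p*) ≠ 0`.
-/

open MvPolynomial

set_option synthInstance.maxHeartbeats 1000000
set_option maxHeartbeats 1000000

open scoped MonomialOrder

/-- In a nonzero combination of polynomials `h s` with pairwise distinct leading monomials `s`, the
largest index `s₀` occurring cannot cancel, so it is the leading monomial of the combination. -/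
lemma exists_max_coeff_ne_zero {n : ℕ} {K : Type*} [Field K] {S : Set (Fin n →₀ ℕ)}
    {h : S → MvPolynomial (Fin n) K} (hne : ∀ s, coeff s.1 (h s) ≠ 0)
    (hlt : ∀ (s : S) (b : Fin n →₀ ℕ), s.1 ≺[MonomialOrder.degLex] b → coeff b (h s) = 0)
    (a : S →₀ K) (ha : a ≠ 0) :
    ∃ s₀ : S, (∀ s ∈ a.support, s.1 ≼[MonomialOrder.degLex] s₀.1) ∧
      coeff s₀.1 (Finsupp.linearCombination K h a) ≠ 0 := by
  obtain ⟨s₀, hs₀, hmax⟩ := a.support.exists_max_image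
    (fun s => (MonomialOrder.degLex (σ := Fin n)).toSyn s.1) (Finsupp.support_nonempty_iff.2 ha)
  refine ⟨s₀, hmax, ?_⟩
  rw [Finsupp.linearCombination_apply, Finsupp.sum, coeff_sum, Finset.sum_eq_single s₀]
  · rw [coeff_smul, smul_eq_mul]
    exact mul_ne_zero (Finsupp.mem_support_iff.1 hs₀) (hne s₀)
  · intro s hs hss
    rw [coeff_smul, hlt s s₀.1, smul_zero]
    refine lt_of_le_of_ne (hmax s hs) fun e => hss (Subtype.ext ?_)
    exact (MonomialOrder.degLex (σ := Fin n)).toSyn.injective e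
  · exact fun hn => absurd hs₀ hn

/-- A `K`-space spanned by polynomials with distinct leading monomials `s ∈ S` for a graded order
has, in degrees at most `d`, dimension the number of `s ∈ S` of degree at most `d`: those basis
elements already span the degree-`≤ d` part. -/
lemma finrank_span_inf_restrictTotalDegree {n : ℕ} {K : Type*} [Field K]
    {S : Set (Fin n →₀ ℕ)} {h : S → MvPolynomial (Fin n) K} (hne : ∀ s, coeff s.1 (h s) ≠ 0)
    (hlt : ∀ (s : S) (b : Fin n →₀ ℕ), s.1 ≺[MonomialOrder.degLex] b → coeff b (h s) = 0) (d : ℕ) :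
    Module.finrank K ↥(Submodule.span K (Set.range h) ⊓ restrictTotalDegree (Fin n) K d) =
      Nat.card {s : S // s.1.degree ≤ d} := by
  have hli : LinearIndependent K h := by
    rw [linearIndependent_iff]
    intro a ha
    by_contra hne0
    obtain ⟨s₀, -, h0⟩ := exists_max_coeff_ne_zero hne hlt a hne0
    exact h0 (by rw [ha, coeff_zero])
  have hspan : Submodule.span K (Set.range h) ⊓ restrictTotalDegree (Fin n) K d =
      Submodule.span K (Set.range fun t : {s : S // s.1.degree ≤ d} => h t.1) := by
    apply le_antisymm
    · rintro f ⟨hf, hfd⟩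
      rw [SetLike.mem_coe, mem_restrictTotalDegree] at hfd
      obtain ⟨a, rfl⟩ := (Finsupp.mem_span_range_iff_exists_finsupp).1 hf
      by_cases ha : a = 0
      · simp [ha]
      obtain ⟨s₀, hmax, h0⟩ := exists_max_coeff_ne_zero hne hlt a ha
      have hs₀ : s₀.1.degree ≤ d :=
        (le_totalDegree (mem_support_iff.2 h0)).trans hfd
      refine Submodule.sum_mem _ fun s hs => Submodule.smul_mem _ _ (Submodule.subset_span ?_)
      exact ⟨⟨s, (Finsupp.DegLex.monotone_degree (hmax s hs)).trans hs₀⟩, rfl⟩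
    · rw [Submodule.span_le]
      rintro _ ⟨t, rfl⟩
      refine ⟨Submodule.subset_span ⟨t.1, rfl⟩, ?_⟩
      rw [SetLike.mem_coe, mem_restrictTotalDegree]
      refine Finset.sup_le fun b hb => ?_
      have hb' : b ≼[MonomialOrder.degLex] t.1.1 := by
        by_contra hcon
        exact mem_support_iff.1 hb (hlt _ _ (not_le.1 hcon))
      exact (Finsupp.DegLex.monotone_degree hb').trans t.2
  rw [hspan]
  exact Module.finrank_eq_nat_card_basis
    (Module.Basis.span (hli.comp (Subtype.val : {s : S // s.1.degree ≤ d} → S)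
      Subtype.val_injective))

/-- The leading monomials of the nonzero elements of an ideal, for the degree-lexicographic
order. -/
def leadingMonomials {n : ℕ} {A : Type*} [CommRing A] (J : Ideal (MvPolynomial (Fin n) A)) :
    Set (Fin n →₀ ℕ) :=
  {s | ∃ f ∈ J, f ≠ 0 ∧ MonomialOrder.degLex.degree f = s}

/-- By Dickson's lemma, every leading monomial of `J` is attained by a monomial multiple of one of
finitely many elements of `J`; the product `c` of their leading coefficients is then divisible by
all the leading coefficients that occur. -/
lemma exists_leading_family {n : ℕ} {A : Type*} [CommRing A] [IsDomain A]
    (J : Ideal (MvPolynomial (Fin n) A)) :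
    ∃ (c : A) (g : leadingMonomials J → MvPolynomial (Fin n) A), c ≠ 0 ∧
      ∀ s, g s ∈ J ∧ MonomialOrder.degLex.degree (g s) = s.1 ∧ MonomialOrder.degLex.leadingCoeff (g s) ∣ c := by
  classical
  set S := leadingMonomials J with hS
  have hpwo : S.IsPWO := Set.isPWO_of_wellQuasiOrderedLE S
  have hfin : {s | Minimal (· ∈ S) s}.Finite :=
    (setOfPred_minimal_antichain _).finite_of_partiallyWellOrderedOn
      (hpwo.mono fun s hs => hs.1)
  choose! f hfJ hf0 hfdeg using (fun s (hs : s ∈ S) => hs)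
  have key : ∀ s : S, ∃ g ∈ J, MonomialOrder.degLex.degree g = s.1 ∧
      MonomialOrder.degLex.leadingCoeff g ∣ ∏ t ∈ hfin.toFinset, MonomialOrder.degLex.leadingCoeff (f t) := by
    intro s
    obtain ⟨t, hts, ht⟩ := hpwo.exists_le_minimal s.2
    refine ⟨monomial (s.1 - t) 1 * f t, J.mul_mem_left _ (hfJ t ht.1), ?_, ?_⟩
    · rw [MonomialOrder.degLex.degree_mul (by simp) (hf0 t ht.1), hfdeg t ht.1,
        MonomialOrder.degLex.degree_monomial, if_neg one_ne_zero, tsub_add_cancel_of_le hts]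
    · rw [MonomialOrder.degLex.leadingCoeff_mul, MonomialOrder.degLex.leadingCoeff_monomial, one_mul]
      exact Finset.dvd_prod_of_mem (fun t => MonomialOrder.degLex.leadingCoeff (f t)) (hfin.mem_toFinset.2 ht)
  choose g hgJ hgdeg hgc using key
  refine ⟨_, g, ?_, fun s => ⟨hgJ s, hgdeg s, hgc s⟩⟩
  rw [Finset.prod_ne_zero_iff]
  intro t ht
  exact MonomialOrder.degLex.leadingCoeff_ne_zero_iff.2 (hf0 t ((hfin.mem_toFinset.1 ht).1))

/-- One step of pseudo-division: cross-multiplying by leading coefficients cancels the common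
leading monomial. -/
lemma pseudo_reduce {n : ℕ} {A : Type*} [CommRing A] {f g : MvPolynomial (Fin n) A}
    (hfg : MonomialOrder.degLex.degree g = MonomialOrder.degLex.degree f)
    (h0 : C (MonomialOrder.degLex.leadingCoeff g) * f - C (MonomialOrder.degLex.leadingCoeff f) * g ≠ 0) :
    MonomialOrder.degLex.degree (C (MonomialOrder.degLex.leadingCoeff g) * f - C (MonomialOrder.degLex.leadingCoeff f) * g)
      ≺[MonomialOrder.degLex] MonomialOrder.degLex.degree f := by
  set r := C (MonomialOrder.degLex.leadingCoeff g) * f - C (MonomialOrder.degLex.leadingCoeff f) * g with hr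
  by_contra hcon
  rw [not_lt] at hcon
  have hc : coeff (MonomialOrder.degLex.degree r) r ≠ 0 := MonomialOrder.degLex.coeff_degree_ne_zero_iff.2 h0
  apply hc
  conv_lhs => rw [hr]
  rw [coeff_sub, coeff_C_mul, coeff_C_mul]
  rcases hcon.eq_or_lt with he | hl
  · have he' := (MonomialOrder.degLex (σ := Fin n)).toSyn.injective he
    rw [← he']
    conv_lhs => enter [2, 2]; rw [← hfg]
    change MonomialOrder.degLex.leadingCoeff g * MonomialOrder.degLex.leadingCoeff f -
      MonomialOrder.degLex.leadingCoeff f * MonomialOrder.degLex.leadingCoeff g = 0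
    ring
  · rw [MonomialOrder.degLex.coeff_eq_zero_of_lt hl, MonomialOrder.degLex.coeff_eq_zero_of_lt (by rwa [hfg])]
    simp

/-- If the leading coefficients of the family `g` stay nonzero under `φ`, the images of the `g s`
span, over `K`, the image of `J`: the leading term of `f ∈ J` is removed by subtracting a multiple
of `g s` after multiplying by a coefficient invertible in `K`. -/
lemma map_mem_span {n : ℕ} {A K : Type*} [CommRing A] [Field K] (φ : A →+* K)
    (J : Ideal (MvPolynomial (Fin n) A)) (g : leadingMonomials J → MvPolynomial (Fin n) A)
    (hgJ : ∀ s, g s ∈ J) (hgdeg : ∀ s, MonomialOrder.degLex.degree (g s) = s.1)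
    (hφ : ∀ s, φ (MonomialOrder.degLex.leadingCoeff (g s)) ≠ 0) (f : MvPolynomial (Fin n) A) (hf : f ∈ J) :
    map φ f ∈ Submodule.span K (Set.range fun s => map φ (g s)) := by
  induction hm : (MonomialOrder.degLex (σ := Fin n)).toSyn (MonomialOrder.degLex.degree f) using
    WellFoundedLT.induction generalizing f with
  | ind m ih =>
  by_cases hf0 : f = 0
  · simp [hf0]
  let s : leadingMonomials J := ⟨MonomialOrder.degLex.degree f, f, hf, hf0, rfl⟩
  set r := C (MonomialOrder.degLex.leadingCoeff (g s)) * f - C (MonomialOrder.degLex.leadingCoeff f) * g s with hr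
  have hrJ : r ∈ J := J.sub_mem (J.mul_mem_left _ hf) (J.mul_mem_left _ (hgJ s))
  have hrspan : map φ r ∈ Submodule.span K (Set.range fun s => map φ (g s)) := by
    by_cases hr0 : r = 0
    · simp [hr0]
    · exact ih _ (hm ▸ pseudo_reduce (hgdeg s) hr0) r hrJ rfl
  have hsum : φ (MonomialOrder.degLex.leadingCoeff (g s)) • map φ f =
      map φ r + φ (MonomialOrder.degLex.leadingCoeff f) • map φ (g s) := by
    rw [hr, map_sub, map_mul, map_mul, map_C, map_C, smul_eq_C_mul, smul_eq_C_mul]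
    ring
  rw [← Submodule.smul_mem_iff _ (hφ s), hsum]
  exact Submodule.add_mem _ hrspan
    (Submodule.smul_mem _ _ (Submodule.subset_span ⟨s, rfl⟩))

/-- A `K`-subspace containing the image under `φ` of the whole ideal `(H j)` contains the ideal
generated by the `φ (H j)`, since the latter is spanned over `K` by the `φ (x ^ u * H j)`. -/
lemma span_map_le {n : ℕ} {A K ι : Type*} [CommRing A] [Field K] (φ : A →+* K)
    (H : ι → MvPolynomial (Fin n) A) (W : Submodule K (MvPolynomial (Fin n) K))
    (hW : ∀ f ∈ Ideal.span (Set.range H), map φ f ∈ W) :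
    (Ideal.span (Set.range fun j => map φ (H j))).restrictScalars K ≤ W := by
  intro x hx
  rw [Submodule.restrictScalars_mem] at hx
  obtain ⟨a, rfl⟩ := (Finsupp.mem_ideal_span_range_iff_exists_finsupp).1 hx
  refine Submodule.sum_mem _ fun j _ => ?_
  generalize a j = q
  induction q using MvPolynomial.induction_on' with
  | monomial u k =>
    have e : monomial u k * map φ (H j) = k • map φ (monomial u 1 * H j) := by
      rw [map_mul, map_monomial, map_one, ← smul_mul_assoc, smul_monomial, smul_eq_mul, mul_one]
    simp only [e]
    exact W.smul_mem _ (hW _ (Ideal.mul_mem_left _ _ (Ideal.subset_span ⟨j, rfl⟩)))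
  | add p q hp hq =>
    simp only [add_mul]
    exact W.add_mem hp hq

/-- A nonzero `c` such that every coefficient map `φ` into a field with `φ c ≠ 0` gives the ideal
generated by the `φ (H j)` the same dimension in degrees at most `d`, namely the number of leading
monomials of degree at most `d` of the ideal generated by the `H j`. -/
lemma exists_finrank_eq_card {n : ℕ} {A ι : Type*} [CommRing A] [IsDomain A]
    (H : ι → MvPolynomial (Fin n) A) :
    ∃ c : A, c ≠ 0 ∧ ∀ (K : Type) [Field K] (φ : A →+* K), φ c ≠ 0 → ∀ d : ℕ,
      Module.finrank K
        ↥((Ideal.span (Set.range fun j => map φ (H j))).restrictScalars K ⊓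
          restrictTotalDegree (Fin n) K d) =
      Nat.card {s : leadingMonomials (Ideal.span (Set.range H)) // s.1.degree ≤ d} := by
  set J := Ideal.span (Set.range H) with hJ
  obtain ⟨c, g, hc, hg⟩ := exists_leading_family J
  refine ⟨c, hc, fun K _ φ hφc d => ?_⟩
  have hφ : ∀ s, φ (MonomialOrder.degLex.leadingCoeff (g s)) ≠ 0 := fun s h0 => by
    obtain ⟨e, he⟩ := (hg s).2.2
    exact hφc (by rw [he, map_mul, h0, zero_mul])
  have hspan : (Ideal.span (Set.range fun j => map φ (H j))).restrictScalars K =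
      Submodule.span K (Set.range fun s => map φ (g s)) := by
    apply le_antisymm
    · exact span_map_le φ H _
        (map_mem_span φ J g (fun s => (hg s).1) (fun s => (hg s).2.1) hφ)
    · rw [Submodule.span_le]
      rintro _ ⟨s, rfl⟩
      have := Ideal.mem_map_of_mem (map φ : MvPolynomial (Fin n) A →+* _) (hg s).1
      rw [hJ, Ideal.map_span, ← Set.range_comp] at this
      exact this
  rw [hspan]
  refine finrank_span_inf_restrictTotalDegree (fun s => ?_) (fun s b hb => ?_) d
  · rw [coeff_map, ← (hg s).2.1]
    exact hφ s
  · rw [coeff_map, MonomialOrder.degLex.coeff_eq_zero_of_lt (by rwa [(hg s).2.1]), map_zero]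

/-- Let `H₁,…,H_m ∈ ℚ[p₁,…,p_ℓ][x₁,…,xₙ]`, let `𝔎 = ℚ(p₁,…,p_ℓ)`, let
`I ⊆ 𝔎[x₁,…,xₙ]` be the ideal generated by the images of the `H_j`, and for `p* ∈ ℂ^ℓ` let
`I_{p*} ⊆ ℂ[x₁,…,xₙ]` be generated by the specializations `H_j(p*)`.  Then for every `d ≥ 0`
there is a nonzero `c_d ∈ ℚ[p₁,…,p_ℓ]` such that `c_d(p*) ≠ 0` implies
`dim_ℂ((I_{p*})_{≤d}) = dim_𝔎(I_{≤d})`, i.e. `HF_{I_{p*}}(d) = HF_I(d)`. -/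
theorem generic_specialization_hilbert (ℓ n m : ℕ)
    (H : Fin m → MvPolynomial (Fin n) (MvPolynomial (Fin ℓ) ℚ)) (d : ℕ) :
    ∃ c : MvPolynomial (Fin ℓ) ℚ, c ≠ 0 ∧
      ∀ pstar : Fin ℓ → ℂ, aeval pstar c ≠ 0 →
        Module.finrank ℂ
            ↥((Ideal.span (Set.range fun j =>
                  map ((aeval pstar : MvPolynomial (Fin ℓ) ℚ →ₐ[ℚ] ℂ) :
                      MvPolynomial (Fin ℓ) ℚ →+* ℂ) (H j))).restrictScalars ℂ ⊓
              restrictTotalDegree (Fin n) ℂ d) =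
          Module.finrank (RatFuncField ℓ)
            ↥((Ideal.span (Set.range fun j =>
                  map (algebraMap (MvPolynomial (Fin ℓ) ℚ)
                      (RatFuncField ℓ)) (H j))).restrictScalars (RatFuncField ℓ) ⊓
              restrictTotalDegree (Fin n) (RatFuncField ℓ) d) := by
  obtain ⟨c, hc, hcard⟩ := exists_finrank_eq_card H
  refine ⟨c, hc, fun pstar hp => ?_⟩
  refine (hcard ℂ _ hp d).trans (hcard (RatFuncField ℓ) _ ?_ d).symm
  exact (map_ne_zero_iff _ (IsFractionRing.injective _ _)).2 hc
end

section
/- Let the square polynomial system 𝒢 (in the kn + k² unknowns (y_1,…,y_k,Λ)) be as described. If (q_1,…,q_k,Λ*) is a nonsingular solution of 𝒢 = 0, then the matrix S_d(q_1,…,q_k) is invertible with Λ* = S_d(q_1,…,q_k)^{−1}, and each q_i is a nonsingular solution of G_{p*} = 0, i.e., G_{p*}(q_i) = 0 and the n×n Jacobian matrix of G_{p*} at q_i is invertible. -/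
/-!
The `k²` equations `Λ·S_d = I_k` say that `Λ*` is a left inverse of the square matrix
`S_d(q₁,…,q_k)`, which gives the first two claims. For the third, the block `G_{p*}(y_a) = 0` of the
system involves only the variables `y_a`, so the corresponding rows of the derivative of `𝒢` act on
a tangent vector `v` as the Jacobian matrix of `G_{p*}` at `q_a` applied to its `y_a`-part
(`fderiv_sysG_fst`). Surjectivity of the derivative of `𝒢` therefore forces
that Jacobian matrix to be surjective, hence invertible.
-/

open MvPolynomial

set_option synthInstance.maxHeartbeats 1000000
set_option maxHeartbeats 1000000

/-- The Fréchet derivative of a polynomial function is given by its formal partial derivatives. -/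
theorem hasFDerivAt_eval {n : ℕ} (p : MvPolynomial (Fin n) ℂ) (x : Fin n → ℂ) :
    HasFDerivAt (fun y : Fin n → ℂ => eval y p)
      (∑ t : Fin n, eval x (pderiv t p) •
        (ContinuousLinearMap.proj t : (Fin n → ℂ) →L[ℂ] ℂ)) x := by
  induction p using MvPolynomial.induction_on with
  | C a =>
    simp only [eval_C]
    refine (hasFDerivAt_const (𝕜 := ℂ) a x).congr_fderiv ?_
    ext v
    simp
  | add p q hp hq =>
    simp only [map_add]
    refine (hp.add hq).congr_fderiv ?_
    ext v
    simp [add_mul, Finset.sum_add_distrib]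
  | mul_X p i hp =>
    have hX : HasFDerivAt (fun y : Fin n → ℂ => y i)
        (ContinuousLinearMap.proj i : (Fin n → ℂ) →L[ℂ] ℂ) x :=
      (ContinuousLinearMap.proj i : (Fin n → ℂ) →L[ℂ] ℂ).hasFDerivAt
    simp only [map_mul, eval_X]
    refine (hp.mul hX).congr_fderiv ?_
    ext v
    simp [pderiv_X, Pi.single_apply, add_mul, Finset.sum_add_distrib, Finset.mul_sum,
      apply_ite]
    simp [mul_comm, mul_left_comm]

theorem differentiable_sysG {ℓ n k : ℕ} (pstar : Fin ℓ → ℂ)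
    (H : Fin n → MvPolynomial (Fin n) (MvPolynomial (Fin ℓ) ℚ))
    (m : Fin k → (Fin n →₀ ℕ)) : Differentiable ℂ (sysG pstar H m) := by
  unfold sysG
  refine Differentiable.prodMk ?_ (by fun_prop)
  refine differentiable_pi.2 fun a => differentiable_pi.2 fun j => ?_
  have h : Differentiable ℂ (fun y : Fin n → ℂ => eval y (specialize pstar (H j))) :=
    fun y => (hasFDerivAt_eval _ y).differentiableAt
  exact h.comp (g := fun y : Fin n → ℂ => eval y (specialize pstar (H j)))
    (f := fun z : (Fin k → Fin n → ℂ) × (Fin k → Fin k → ℂ) => z.1 a) (by fun_prop)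

/-- The `(a, j)` row of the derivative of `𝒢` is the gradient of `h_{j,p*}` at `y_a`, acting on the
`y_a`-part of the tangent vector. -/
theorem fderiv_sysG_fst {ℓ n k : ℕ} (pstar : Fin ℓ → ℂ)
    (H : Fin n → MvPolynomial (Fin n) (MvPolynomial (Fin ℓ) ℚ))
    (m : Fin k → (Fin n →₀ ℕ)) (z v : (Fin k → Fin n → ℂ) × (Fin k → Fin k → ℂ))
    (a : Fin k) (j : Fin n) :
    (fderiv ℂ (sysG pstar H m) z v).1 a j =
      ∑ t : Fin n, eval (z.1 a) (pderiv t (specialize pstar (H j))) * v.1 a t := by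
  let Y : ((Fin k → Fin n → ℂ) × (Fin k → Fin k → ℂ)) →L[ℂ] (Fin n → ℂ) :=
    (ContinuousLinearMap.proj a).comp (ContinuousLinearMap.fst ℂ _ _)
  let P : ((Fin k → Fin n → ℂ) × (Fin k → Fin k → ℂ)) →L[ℂ] ℂ :=
    (ContinuousLinearMap.proj j).comp Y
  -- Two computations of the derivative of `z ↦ h_{j,p*}(y_a)`, as an entry of `𝒢` and directly.
  have h1 := P.hasFDerivAt.comp z (differentiable_sysG pstar H m z).hasFDerivAt
  have h2 := (hasFDerivAt_eval (specialize pstar (H j)) (Y z)).comp z Y.hasFDerivAt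
  have h3 := congrArg (fun L => L v) (h1.unique h2)
  simpa [P, Y] using h3

/-- If `(q₁,…,q_k,Λ*)` is a nonsingular solution of `𝒢 = 0`, then the
matrix `S_d(q₁,…,q_k)` is invertible with `Λ* = S_d(q₁,…,q_k)⁻¹`, and each `qᵢ` is a
nonsingular solution of `G_{p*} = 0`, i.e. `G_{p*}(qᵢ) = 0` and the `n×n` Jacobian matrix of
`G_{p*}` at `qᵢ` is invertible. -/
theorem nonsingular_solution_structure (ℓ n k d : ℕ)
    (H : Fin n → MvPolynomial (Fin n) (MvPolynomial (Fin ℓ) ℚ))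
    (pstar : Fin ℓ → ℂ)
    (m : Fin k → (Fin n →₀ ℕ)) (hm : Function.Injective m)
    (hmd : ∀ j, ((m j).sum fun _ e => e) ≤ d)
    (z : (Fin k → Fin n → ℂ) × (Fin k → Fin k → ℂ))
    (hz : sysG pstar H m z = 0)
    (hreg : Function.Bijective (fderiv ℂ (sysG pstar H m) z)) :
    IsUnit (Matrix.of fun a b : Fin k => ∏ t : Fin n, z.1 a t ^ (m b) t) ∧
      Matrix.of z.2 = (Matrix.of fun a b : Fin k => ∏ t : Fin n, z.1 a t ^ (m b) t)⁻¹ ∧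
      ∀ a : Fin k,
        (∀ j : Fin n, eval (z.1 a) (specialize pstar (H j)) = 0) ∧
          IsUnit (Matrix.of fun j t : Fin n =>
            eval (z.1 a) (pderiv t (specialize pstar (H j)))) := by
  have hleft : Matrix.of z.2 *
      (Matrix.of fun a b : Fin k => ∏ t : Fin n, z.1 a t ^ (m b) t) = 1 := by
    ext a b
    have h := congrFun (congrFun (congrArg Prod.snd hz) a) b
    simpa [Matrix.mul_apply, Matrix.one_apply] using sub_eq_zero.1 h
  refine ⟨.of_mul_eq_one_right _ hleft, (Matrix.inv_eq_left_inv hleft).symm,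
    fun a => ⟨fun j => congrFun (congrFun (congrArg Prod.fst hz) a) j, ?_⟩⟩
  rw [← Matrix.mulVec_surjective_iff_isUnit]
  intro w
  obtain ⟨v, hv⟩ := hreg.2 (Function.const _ w, 0)
  refine ⟨v.1 a, ?_⟩
  ext j
  have h := congrFun (congrFun (congrArg Prod.fst hv) a) j
  rw [fderiv_sysG_fst] at h
  simpa [Matrix.mulVec, dotProduct] using h
end
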